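/- arXiv:2406.15800 — 7 statements merged into one kernel-verified Lean document; each statement's English description precedes it below -/
import Mathlib

section
/- Let N be a finite group (written multiplicatively as (N,·)). Then the following are equivalent: (1) for every binary operation ∘ on N such that (N,·,∘) is a skew brace, every subgroup of (N,∘) is a left ideal of (N,·,∘); (2) N is isomorphic to the cyclic group C₂ or to the Klein four-group C₂ × C₂, or N is cyclic of odd order and q does not divide p − 1 for all prime divisors p, q of |N|. -/
section SkewBraceDefs

variable {G : Type*}

/-- `op` is a group operation on `G` (associative, with identity and inverses). -/
def IsGroupOp (op : G → G → G) : Prop :=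
  (∀ a b c : G, op (op a b) c = op a (op b c)) ∧
  ∃ e : G, (∀ a : G, op e a = a ∧ op a e = a) ∧ ∀ a : G, ∃ b : G, op a b = e ∧ op b a = e

/-- `(G, *, op)` is a skew brace: `op` is a group operation and the brace relation
`a ∘ (b * c) = (a ∘ b) * a⁻¹ * (a ∘ c)` holds. -/
def IsSkewBrace [Group G] (op : G → G → G) : Prop :=
  IsGroupOp op ∧ ∀ a b c : G, op a (b * c) = op a b * a⁻¹ * op a c

/-- `S` is a subgroup of `(G, op)` (the two operations of a skew brace share the
identity `1`). -/
def IsCircSubgroup [Group G] (op : G → G → G) (S : Set G) : Prop :=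
  (1 : G) ∈ S ∧ (∀ a ∈ S, ∀ b ∈ S, op a b ∈ S) ∧
  ∀ a ∈ S, ∃ b ∈ S, op a b = 1 ∧ op b a = 1

/-- A left ideal of the skew brace `(G, *, op)`: a subgroup `I` of `(G, *)` with
`γ_a(I) ⊆ I` for all `a`, where `γ_a b = a⁻¹ * (a ∘ b)`. -/
def IsLeftIdeal [Group G] (op : G → G → G) (I : Subgroup G) : Prop :=
  ∀ a : G, ∀ b ∈ I, a⁻¹ * op a b ∈ I

/-- Additive version of `IsSkewBrace`: `a ∘ (b + c) = (a ∘ b) - a + (a ∘ c)`. -/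
def IsSkewBraceAdd [AddGroup G] (op : G → G → G) : Prop :=
  IsGroupOp op ∧ ∀ a b c : G, op a (b + c) = op a b - a + op a c

/-- Additive version of `IsCircSubgroup`. -/
def IsCircSubgroupAdd [AddGroup G] (op : G → G → G) (S : Set G) : Prop :=
  (0 : G) ∈ S ∧ (∀ a ∈ S, ∀ b ∈ S, op a b ∈ S) ∧
  ∀ a ∈ S, ∃ b ∈ S, op a b = 0 ∧ op b a = 0

/-- Additive version of `IsLeftIdeal`: `γ_a b = -a + (a ∘ b)`. -/
def IsLeftIdealAdd [AddGroup G] (op : G → G → G) (I : AddSubgroup G) : Prop :=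
  ∀ a : G, ∀ b ∈ I, -a + op a b ∈ I

end SkewBraceDefs

/-!
A character `χ : N → ZMod n` and an automorphism `σ` of exponent `n` preserving `χ` give the skew
brace `a ∘ b = a * σ ^ χ(a) (b)`, and most obstructions to condition (1) come from such twists.

The operation `a ∘ b = b * a` shows that all subgroups of `N` are normal, so commutators are
central. A noncommuting pair with minimal orders then has both orders equal to four and generates a
quaternion group, where twisting by an inner automorphism gives a contradiction; hence `N` is
abelian. For `|N|` even, `σ` the inversion forces exponent two and a transvection forces `|N| ≤ 4`.
For `|N|` odd, a transvection along an element of prime order outside a cyclic subgroup of maximal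
order forces `N` to be cyclic, and a power automorphism of order `q` on the Sylow `p`-subgroup rules
out `q ∣ p - 1`.

Conversely, in the cyclic case `γ_x` is a power map `b ↦ b ^ v`, and the `k`-th circle power of `x`
is `x ^ (1 + v + ⋯ + v ^ (k - 1))`. The condition on primes makes `v ≡ 1` modulo every prime divisor
of `|N|`, so by lifting the exponent the elements of a circle subgroup `S` satisfy `x ^ |S| = 1`.
Thus `S` is the unique subgroup of order `|S|` of `N`, which every `γ_a` preserves.
-/

/-- Condition (1) of the theorem: whichever skew brace operation `∘` is put on `N`, every subgroup
of `(N, ∘)` is a left ideal. -/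
def EveryCircSubgroupIsLeftIdeal (N : Type*) [Group N] : Prop :=
  ∀ op : N → N → N, IsSkewBrace op → ∀ S : Set N, IsCircSubgroup op S →
    ∃ I : Subgroup N, (I : Set N) = S ∧ IsLeftIdeal op I

section CircSubgroups

variable {N : Type*} [Group N] {op : N → N → N} {S : Set N} {a b : N}

protected theorem EveryCircSubgroupIsLeftIdeal.mul_mem (H : EveryCircSubgroupIsLeftIdeal N)
    (h : IsSkewBrace op) (hS : IsCircSubgroup op S) (ha : a ∈ S) (hb : b ∈ S) : a * b ∈ S := by
  obtain ⟨I, rfl, -⟩ := H op h S hS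
  exact I.mul_mem ha hb

theorem EveryCircSubgroupIsLeftIdeal.inv_mul_op_mem (H : EveryCircSubgroupIsLeftIdeal N)
    (h : IsSkewBrace op) (hS : IsCircSubgroup op S) (a : N) (hb : b ∈ S) :
    a⁻¹ * op a b ∈ S := by
  obtain ⟨I, rfl, hI⟩ := H op h S hS
  exact hI a b hb

theorem isCircSubgroup_range {f : ℤ → N} (f_zero : f 0 = 1)
    (f_add : ∀ i j, f (i + j) = op (f i) (f j)) : IsCircSubgroup op (Set.range f) := by
  refine ⟨⟨0, f_zero⟩, ?_, ?_⟩
  · rintro _ ⟨i, rfl⟩ _ ⟨j, rfl⟩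
    exact ⟨i + j, f_add i j⟩
  · rintro _ ⟨i, rfl⟩
    refine ⟨f (-i), ⟨-i, rfl⟩, ?_, ?_⟩ <;> rw [← f_add, ← f_zero] <;> congr 1 <;> ring

theorem isSkewBrace_mul_apply (γ : N →* MulAut N) (hγ : ∀ a b, γ (γ a b) = γ b) :
    IsSkewBrace fun a b => a * γ a b := by
  refine ⟨⟨fun a b c => ?_, 1, fun a => ⟨by simp, by simp⟩, fun a => ⟨(γ a)⁻¹ a⁻¹, ?_, ?_⟩⟩,
    fun a b c => ?_⟩
  · simp only [map_mul, hγ, MulAut.mul_apply, mul_assoc]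
  · simp
  · have hγ_inv : γ ((γ a)⁻¹ a⁻¹) = (γ a)⁻¹ := by rw [← map_inv, hγ, map_inv]
    simp only [hγ_inv, ← map_mul, inv_mul_cancel, map_one]
  · simp only [map_mul, mul_assoc, inv_mul_cancel_left]

theorem isSkewBrace_swap_mul : IsSkewBrace fun a b : N => b * a := by
  refine ⟨⟨fun a b c => (mul_assoc c b a).symm, 1, fun a => ⟨mul_one a, one_mul a⟩,
    fun a => ⟨a⁻¹, inv_mul_cancel a, mul_inv_cancel a⟩⟩, fun a b c => ?_⟩
  simp only [mul_assoc, mul_inv_cancel_left]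

theorem EveryCircSubgroupIsLeftIdeal.normal (H : EveryCircSubgroupIsLeftIdeal N)
    (K : Subgroup N) : K.Normal := by
  have hK : IsCircSubgroup (fun a b : N => b * a) K :=
    ⟨K.one_mem, fun _ ha _ hb => K.mul_mem hb ha,
      fun a ha => ⟨a⁻¹, K.inv_mem ha, inv_mul_cancel a, mul_inv_cancel a⟩⟩
  refine ⟨fun b hb g => ?_⟩
  simpa [mul_assoc] using H.inv_mul_op_mem isSkewBrace_swap_mul hK g⁻¹ hb

end CircSubgroups

/-- The homomorphism `ZMod n → M` sending `1` to an element `g` with `g ^ n = 1`. -/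
def zmodPowersHom {M : Type*} [Group M] {n : ℕ} (g : M) (hg : g ^ n = 1) :
    Multiplicative (ZMod n) →* M :=
  AddMonoidHom.toMultiplicativeLeft
    (ZMod.lift n ⟨zmultiplesHom (Additive M) (Additive.ofMul g), by
      rw [zmultiplesHom_apply, natCast_zsmul, ← ofMul_pow, hg, ofMul_one]⟩)

theorem zmodPowersHom_ofAdd_intCast {M : Type*} [Group M] {n : ℕ} (g : M) (hg : g ^ n = 1)
    (k : ℤ) : zmodPowersHom g hg (Multiplicative.ofAdd (k : ZMod n)) = g ^ k := by
  simp [zmodPowersHom]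

/-- A character `N → ZMod n` together with an automorphism of `N` of exponent `n` preserving it.
Such a pair yields the skew brace operation `a ∘ b = a * aut ^ char a (b)`, from which all the
counterexamples to condition (1) are built. -/
structure ZModTwist (N : Type*) [Group N] (n : ℕ) where
  char : N →* Multiplicative (ZMod n)
  aut : MulAut N
  aut_pow : aut ^ n = 1
  char_aut : ∀ a, char (aut a) = char a

namespace ZModTwist

variable {N : Type*} [Group N] {n : ℕ} (T : ZModTwist N n)

/-- The gamma function `a ↦ aut ^ char a` of the skew brace attached to a twist. -/
def gamma : N →* MulAut N :=
  (zmodPowersHom T.aut T.aut_pow).comp T.char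

/-- The circle operation of the skew brace attached to a twist. -/
def op (a b : N) : N :=
  a * T.gamma a b

variable {T}

theorem gamma_eq_zpow {a : N} {k : ℤ} (ha : T.char a = .ofAdd (k : ZMod n)) :
    T.gamma a = T.aut ^ k := by
  rw [gamma, MonoidHom.comp_apply, ha, zmodPowersHom_ofAdd_intCast]

theorem op_eq_of_char_eq {a : N} {k : ℤ} (ha : T.char a = .ofAdd (k : ZMod n)) (b : N) :
    T.op a b = a * (T.aut ^ k) b := by
  rw [op, gamma_eq_zpow ha]

theorem op_eq_of_char_eq_one {a : N} (ha : T.char a = 1) (b : N) : T.op a b = a * b := by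
  rw [op_eq_of_char_eq (k := 0) (by simpa using ha), zpow_zero, MulAut.one_apply]

theorem op_eq_of_char_eq_ofAdd_one {a : N} (ha : T.char a = .ofAdd 1) (b : N) :
    T.op a b = a * T.aut b := by
  rw [op_eq_of_char_eq (k := 1) (by simpa using ha), zpow_one]

theorem char_aut_zpow (k : ℤ) (a : N) : T.char ((T.aut ^ k) a) = T.char a := by
  have char_inv (b : N) : T.char (T.aut⁻¹ b) = T.char b := by
    rw [← T.char_aut, MulAut.apply_inv_self]
  induction k generalizing a with
  | zero => simp
  | succ k ih => rw [zpow_add_one, MulAut.mul_apply, ih, T.char_aut]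
  | pred k ih => rw [zpow_sub_one, MulAut.mul_apply, ih, char_inv]

variable (T)

theorem isSkewBrace : IsSkewBrace T.op := by
  refine isSkewBrace_mul_apply T.gamma fun a b => ?_
  obtain ⟨k, hk⟩ := ZMod.intCast_surjective (T.char a).toAdd
  have hγ : T.gamma a = T.aut ^ k := gamma_eq_zpow (by rw [hk, ofAdd_toAdd])
  rw [hγ, gamma, MonoidHom.comp_apply, char_aut_zpow, MonoidHom.comp_apply]

end ZModTwist

namespace EveryCircSubgroupIsLeftIdeal

open ZModTwist

section Group

variable {N : Type*} [Group N] {n : ℕ} {T : ZModTwist N n}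

theorem mul_self_eq_one (H : EveryCircSubgroupIsLeftIdeal N) {y : N} (hy : T.char y = .ofAdd 1)
    (aut_y : T.aut y = y⁻¹) : y * y = 1 := by
  have op_self : T.op y y = 1 := by
    rw [op_eq_of_char_eq_ofAdd_one hy, aut_y, mul_inv_cancel]
  have op_one : T.op y 1 = y := by
    rw [op_eq_of_char_eq_ofAdd_one hy, map_one, mul_one]
  have one_op (b : N) : T.op 1 b = b := by
    rw [op_eq_of_char_eq_one (map_one _), one_mul]
  have hS : IsCircSubgroup T.op {1, y} := by
    refine ⟨Or.inl rfl, ?_, ?_⟩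
    · rintro a (rfl | rfl) b (rfl | rfl) <;> simp [op_self, op_one, one_op]
    · rintro a (rfl | rfl)
      · exact ⟨1, Or.inl rfl, one_op 1, one_op 1⟩
      · exact ⟨_, Or.inr rfl, op_self, op_self⟩
  rcases H.mul_mem T.isSkewBrace hS (Or.inr rfl) (Or.inr rfl) with h | h
  · exact h
  · rw [mul_eq_left.mp h, mul_one]

theorem aut_mem_zpowers (H : EveryCircSubgroupIsLeftIdeal N) {a y : N}
    (ha : T.char a = .ofAdd 1) (hy : T.char y = 1) : T.aut y ∈ Subgroup.zpowers y := by
  have char_zpow (i : ℤ) : T.char (y ^ i) = 1 := by rw [map_zpow, hy, one_zpow]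
  have hS : IsCircSubgroup T.op (Set.range fun i : ℤ => y ^ i) :=
    isCircSubgroup_range (zpow_zero y) fun i j => by
      rw [op_eq_of_char_eq_one (char_zpow i), zpow_add]
  have h := H.inv_mul_op_mem T.isSkewBrace hS a ⟨1, zpow_one y⟩
  rwa [op_eq_of_char_eq_ofAdd_one ha, inv_mul_cancel_left] at h

end Group

end EveryCircSubgroupIsLeftIdeal

namespace ZModTwist

open Multiplicative

variable {N : Type*} [CommGroup N] {n : ℕ}

theorem map_zmodPowersHom_eq_one {w : N} {hw : w ^ n = 1} {τ : N →* Multiplicative (ZMod n)}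
    (hτ : τ w = 1) (t : Multiplicative (ZMod n)) : τ (zmodPowersHom w hw t) = 1 := by
  obtain ⟨k, hk⟩ := ZMod.intCast_surjective t.toAdd
  rw [← ofAdd_toAdd t, ← hk, zmodPowersHom_ofAdd_intCast, map_zpow, hτ, one_zpow]

/-- The transvection `b ↦ b * w ^ τ b` along an element `w` killed by the character `τ`. -/
def transvectionAut (τ : N →* Multiplicative (ZMod n)) (w : N) (hw : w ^ n = 1) (hτ : τ w = 1) :
    MulAut N where
  toFun b := b * zmodPowersHom w hw (τ b)
  invFun b := b * (zmodPowersHom w hw (τ b))⁻¹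
  left_inv b := by simp [map_zmodPowersHom_eq_one hτ]
  right_inv b := by simp [map_zmodPowersHom_eq_one hτ]
  map_mul' a b := by rw [map_mul, map_mul, mul_mul_mul_comm]

theorem transvectionAut_zpow_apply {τ : N →* Multiplicative (ZMod n)} {w : N} (hw : w ^ n = 1)
    (hτ : τ w = 1) {b : N} {j : ℤ} (hb : τ b = ofAdd (j : ZMod n)) (k : ℤ) :
    (transvectionAut τ w hw hτ ^ k) b = b * w ^ (j * k) := by
  set σ := transvectionAut τ w hw hτ
  have apply_eq {c : N} (hc : τ c = ofAdd (j : ZMod n)) : σ c = c * w ^ j := by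
    rw [← zmodPowersHom_ofAdd_intCast w hw, ← hc]; rfl
  have τ_mul (i : ℤ) : τ (b * w ^ i) = ofAdd (j : ZMod n) := by
    rw [map_mul, map_zpow, hτ, one_zpow, mul_one, hb]
  induction k with
  | zero => simp
  | succ k ih =>
    rw [add_comm, zpow_one_add, MulAut.mul_apply, ih, apply_eq (τ_mul _), mul_assoc, ← zpow_add,
      mul_one_add, add_comm]
  | pred k ih =>
    rw [sub_eq_neg_add, zpow_add, zpow_neg_one, MulAut.mul_apply, ih, MulAut.inv_def,
      MulEquiv.symm_apply_eq, apply_eq (τ_mul _), mul_assoc, ← zpow_add]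
    congr 2
    ring

/-- The twist with character `χ` and automorphism the transvection `b ↦ b * w ^ τ b`. -/
def transvection (χ τ : N →* Multiplicative (ZMod n)) (w : N) (hw : w ^ n = 1) (hχ : χ w = 1)
    (hτ : τ w = 1) : ZModTwist N n where
  char := χ
  aut := transvectionAut τ w hw hτ
  aut_pow := by
    ext b
    obtain ⟨j, hj⟩ := ZMod.intCast_surjective (τ b).toAdd
    rw [← zpow_natCast, transvectionAut_zpow_apply hw hτ (j := j) (by rw [hj, ofAdd_toAdd]),
      mul_comm j, zpow_mul, zpow_natCast, hw, one_zpow, mul_one, MulAut.one_apply]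
  char_aut a := by
    change χ (a * zmodPowersHom w hw (τ a)) = χ a
    rw [map_mul, map_zmodPowersHom_eq_one hχ, mul_one]

end ZModTwist

namespace EveryCircSubgroupIsLeftIdeal

open ZModTwist Multiplicative

theorem exists_mul_self_eq {N : Type*} [Group N] {n : ℕ} {T : ZModTwist N n}
    (H : EveryCircSubgroupIsLeftIdeal N) {f : ℤ → N} (f_zero : f 0 = 1)
    (f_add : ∀ i j, f (i + j) = f i * (T.aut ^ i) (f j))
    (char_f : ∀ k, T.char (f k) = ofAdd (k : ZMod n)) :
    ∃ m : ℤ, f 1 * f 1 = f (2 + n * m) := by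
  have hf : IsCircSubgroup T.op (Set.range f) :=
    isCircSubgroup_range f_zero fun i j => by rw [T.op_eq_of_char_eq (char_f i), f_add]
  obtain ⟨k, hk⟩ := H.mul_mem T.isSkewBrace hf ⟨1, rfl⟩ ⟨1, rfl⟩
  have hχ := congrArg T.char hk
  rw [map_mul, char_f, char_f, ← ofAdd_add, ofAdd.apply_eq_iff_eq] at hχ
  obtain ⟨m, hm⟩ := (ZMod.intCast_zmod_eq_zero_iff_dvd (k - 2) n).mp (by
    push_cast at hχ ⊢
    rw [hχ]
    norm_num)
  exact ⟨m, by rw [← hm, add_sub_cancel, hk]⟩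

section CommGroup

variable {N : Type*} [CommGroup N] {n : ℕ}

theorem sq_mem_zpowers (H : EveryCircSubgroupIsLeftIdeal N) {χ : N →* Multiplicative (ZMod n)}
    {y z : N} (hy : χ y = ofAdd 1) (hz : χ z = 1) (hzn : z ^ n = 1) :
    z ^ 2 ∈ Subgroup.zpowers y := by
  have hzn' : (z ^ 2) ^ n = 1 := by rw [pow_right_comm, hzn, one_pow]
  have hz' : χ (z ^ 2) = 1 := by rw [map_pow, hz, one_pow]
  let T := transvection χ χ (z ^ 2) hzn' hz' hz'
  let f (k : ℤ) : N := y ^ k * z ^ (k ^ 2)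
  have char_f (k : ℤ) : χ (f k) = ofAdd (k : ZMod n) := by
    simp only [f]
    rw [map_mul, map_zpow, map_zpow, hy, hz, one_zpow, mul_one, ← ofAdd_zsmul, zsmul_one]
  have f_add (i j : ℤ) : f (i + j) = f i * (T.aut ^ i) (f j) := by
    have aut_zpow : (T.aut ^ i) (f j) = f j * (z ^ 2) ^ (j * i) :=
      transvectionAut_zpow_apply hzn' hz' (char_f j) i
    simp only [f] at aut_zpow ⊢
    rw [aut_zpow, ← zpow_natCast, ← zpow_mul, ← mul_assoc, mul_mul_mul_comm, ← zpow_add,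
      ← zpow_add, mul_assoc, ← zpow_add]
    congr 2
    push_cast
    ring
  obtain ⟨m, hm⟩ := H.exists_mul_self_eq (T := T) (by simp [f]) f_add char_f
  have z_zpow : z ^ ((2 + n * m) ^ 2) = z ^ 2 * z ^ 2 := by
    rw [show (2 + n * m) ^ 2 = n * (4 * m + n * m ^ 2) + 4 by ring, zpow_add, zpow_mul,
      zpow_natCast, hzn, one_zpow, one_mul, zpow_ofNat, ← pow_add]
  have key : y ^ 2 * z ^ 2 = y ^ 2 * (y ^ (n * m) * z ^ 2) * z ^ 2 := by
    calc y ^ 2 * z ^ 2 = f 1 * f 1 := by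
          simp only [f, zpow_one, (one_pow 2 : (1 : ℤ) ^ 2 = 1), mul_mul_mul_comm, sq (_ : N)]
      _ = y ^ (2 + n * m) * (z ^ 2 * z ^ 2) := by rw [hm, ← z_zpow]
      _ = _ := by rw [zpow_add, zpow_ofNat]; simp only [mul_assoc]
  exact ⟨-(n * m), by simpa [inv_eq_iff_mul_eq_one] using key⟩

theorem exists_mul_aut_aut_eq_zpow (H : EveryCircSubgroupIsLeftIdeal N) {T : ZModTwist N n}
    {a w : N} (hw : T.char w = ofAdd 1) (aut_w : T.aut w = w) :
    ∃ k : ℤ, a * T.aut (T.aut a) = T.aut a ^ 2 * w ^ k := by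
  have aut_zpow_w (i j : ℤ) : (T.aut ^ i) (w ^ j) = w ^ j := by
    rw [map_zpow]
    congr 1
    exact zpow_mem (show T.aut ∈ MulAction.stabilizer (MulAut N) w from aut_w) i
  let f (j : ℤ) : N := w ^ j * (a / (T.aut ^ j) a)
  have char_f (j : ℤ) : T.char (f j) = ofAdd (j : ZMod n) := by
    simp only [f]
    rw [map_mul, map_div, char_aut_zpow, div_self', mul_one, map_zpow, hw, ← ofAdd_zsmul, zsmul_one]
  have f_add (i j : ℤ) : f (i + j) = f i * (T.aut ^ i) (f j) := by
    simp only [f]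
    rw [map_mul, map_div, aut_zpow_w, ← MulAut.mul_apply, ← zpow_add, zpow_add w,
      mul_mul_mul_comm, div_mul_div_cancel]
  obtain ⟨m, hm⟩ := H.exists_mul_self_eq (by simp [f]) f_add char_f
  have aut_zpow : T.aut ^ (2 + n * m) = T.aut * T.aut := by
    rw [zpow_add, zpow_mul, zpow_natCast, T.aut_pow, one_zpow, mul_one, zpow_two]
  have key : a / T.aut a * (a / T.aut a) = w ^ (n * m) * (a / T.aut (T.aut a)) := by
    refine mul_left_cancel (a := w * w) ?_
    calc w * w * (a / T.aut a * (a / T.aut a)) = f 1 * f 1 := by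
          simp only [f, zpow_one, mul_mul_mul_comm]
      _ = w * w * (w ^ (n * m) * (a / T.aut (T.aut a))) := by
          simp only [hm, f, aut_zpow, MulAut.mul_apply, zpow_add, zpow_two, mul_assoc]
  refine ⟨n * m, ?_⟩
  rw [div_mul_div_comm, ← mul_div_assoc, div_eq_div_iff_mul_eq_mul, mul_assoc, mul_right_comm,
    mul_comm _ a, mul_left_cancel_iff] at key
  rw [key, sq, mul_comm]

-- `aut b / b` takes the same value `δ` all along the orbit of `a`, so `δ ^ n = 1`; but the order
-- of `δ` also divides that of `a`.
theorem aut_eq_self_of_coprime (H : EveryCircSubgroupIsLeftIdeal N) {T : ZModTwist N n} {a w : N}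
    (hw : T.char w = ofAdd 1) (aut_w : T.aut w = w)
    (hcop : (orderOf a).Coprime (orderOf w)) : T.aut a = a := by
  have aut_pow_order : T.aut a ^ orderOf a = 1 := by rw [← map_pow, pow_orderOf_eq_one, map_one]
  obtain ⟨k, hk⟩ := H.exists_mul_aut_aut_eq_zpow (a := a) hw aut_w
  have w_zpow : w ^ k = 1 := by
    have h₁ : (w ^ k) ^ orderOf a = 1 := by
      rw [← inv_mul_eq_iff_eq_mul.mpr hk]
      simp only [mul_pow, inv_pow, pow_right_comm, ← map_pow, pow_orderOf_eq_one, map_one]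
      simp
    have h₂ : (w ^ k) ^ orderOf w = 1 := by rw [← zpow_natCast, zpow_comm]; simp
    simpa [hcop.gcd_eq_one] using pow_gcd_eq_one.mpr ⟨h₁, h₂⟩
  set δ := T.aut a / a with hδ
  have aut_δ : T.aut δ = δ := by
    rw [w_zpow, mul_one] at hk
    rw [hδ, map_div, div_eq_div_iff_mul_eq_mul, mul_comm, hk, sq]
  have aut_pow_a (i : ℕ) : (T.aut ^ i) a = a * δ ^ i := by
    induction i with
    | zero => simp
    | succ i ih =>
      rw [pow_succ', MulAut.mul_apply, ih, map_mul, map_pow, aut_δ, pow_succ', ← mul_assoc,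
        hδ, mul_div_cancel]
  have δ_pow_n : δ ^ n = 1 := by simpa [T.aut_pow] using aut_pow_a n
  have δ_pow_order : δ ^ orderOf a = 1 := by
    rw [hδ, div_pow, aut_pow_order, pow_orderOf_eq_one, div_one]
  have n_dvd : n ∣ orderOf w := by
    have h : T.char (w ^ orderOf w) = 1 := by rw [pow_orderOf_eq_one, map_one]
    rwa [map_pow, hw, ← ofAdd_nsmul, nsmul_one, ofAdd_eq_one, ZMod.natCast_eq_zero_iff] at h
  have δ_eq_one : δ = 1 := by
    simpa [(hcop.coprime_dvd_right n_dvd).gcd_eq_one]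
      using pow_gcd_eq_one.mpr ⟨δ_pow_order, δ_pow_n⟩
  exact div_eq_one.mp δ_eq_one

end CommGroup

end EveryCircSubgroupIsLeftIdeal

section Characters

theorem exists_character_apply_eq_ofAdd_one {V : Type*} [CommGroup V] {p : ℕ} (hp : p.Prime)
    (hV : ∀ x : V, x ^ p = 1) {y : V} (hy : y ≠ 1) :
    ∃ χ : V →* Multiplicative (ZMod p), χ y = .ofAdd 1 := by
  have : Fact p.Prime := ⟨hp⟩
  let : Module (ZMod p) (Additive V) :=
    AddCommGroup.zmodModule (n := p) (G := Additive V) hV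
  have hy' : Additive.ofMul y ∉ (⊥ : Submodule (ZMod p) (Additive V)) := by
    rwa [Submodule.mem_bot, ofMul_eq_zero]
  obtain ⟨f, hf, -⟩ := Submodule.exists_le_ker_of_notMem hy'
  refine ⟨AddMonoidHom.toMultiplicativeRight ((f (.ofMul y))⁻¹ • f).toAddMonoidHom, ?_⟩
  exact congrArg Multiplicative.ofAdd (inv_mul_cancel₀ hf)

theorem exists_character_of_notMem {N : Type*} [Group N] {p : ℕ} (hp : p.Prime) {H : Subgroup N}
    (hcomm : commutator N ≤ H) (hpow : ∀ a : N, a ^ p ∈ H) {y : N} (hy : y ∉ H) :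
    ∃ χ : N →* Multiplicative (ZMod p), χ y = .ofAdd 1 ∧ H ≤ χ.ker := by
  have : H.Normal := .of_commutator_le N hcomm
  have : IsMulCommutative (N ⧸ H) :=
    Subgroup.Normal.quotient_commutative_iff_commutator_le.mpr hcomm
  let : CommGroup (N ⧸ H) := { (inferInstance : Group (N ⧸ H)) with mul_comm := mul_comm' }
  have hquot (x : N ⧸ H) : x ^ p = 1 := by
    induction x using QuotientGroup.induction_on with
    | H a => exact (QuotientGroup.eq_one_iff _).mpr (hpow a)
  obtain ⟨χ, hχ⟩ := exists_character_apply_eq_ofAdd_one hp hquot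
    (mt (QuotientGroup.eq_one_iff y).mp hy)
  refine ⟨χ.comp (QuotientGroup.mk' H), hχ, fun a ha => ?_⟩
  rw [MonoidHom.mem_ker, MonoidHom.comp_apply, QuotientGroup.mk'_apply,
    (QuotientGroup.eq_one_iff a).mpr ha, map_one]

end Characters

section CentralCommutators

open scoped commutatorElement

variable {N : Type*} [Group N]

theorem commute_commutatorElement (hN : commutator N ≤ Subgroup.center N) (g h a : N) :
    Commute ⁅g, h⁆ a :=
  (Subgroup.mem_center_iff.mp (hN (Subgroup.commutator_mem_commutator trivial trivial)) a).symm

theorem commutatorElement_mul_right (hN : commutator N ≤ Subgroup.center N) (g a b : N) :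
    ⁅g, a * b⁆ = ⁅g, a⁆ * ⁅g, b⁆ := by
  rw [commutatorElement_mul_right_eq_mul_conj, mul_assoc _ a,
    (commute_commutatorElement hN g b a).symm.eq, ← mul_assoc, mul_inv_cancel_right]

theorem commutatorElement_pow_right (hN : commutator N ≤ Subgroup.center N) (g a : N) (k : ℕ) :
    ⁅g, a ^ k⁆ = ⁅g, a⁆ ^ k := by
  induction k with
  | zero => simp
  | succ k ih => rw [pow_succ, commutatorElement_mul_right hN, ih, pow_succ]

theorem commutatorElement_pow_left (hN : commutator N ≤ Subgroup.center N) (g a : N) (k : ℕ) :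
    ⁅g ^ k, a⁆ = ⁅g, a⁆ ^ k := by
  rw [← commutatorElement_inv a, commutatorElement_pow_right hN, ← inv_pow, commutatorElement_inv]

theorem mul_pow_eq_pow_choose_two_mul (hN : commutator N ≤ Subgroup.center N) (y h : N) (k : ℕ) :
    (y * h) ^ k = ⁅h, y⁆ ^ k.choose 2 * (y ^ k * h ^ k) := by
  induction k with
  | zero => simp
  | succ k ih =>
    have comm_pow (m : ℕ) (a : N) : Commute (⁅h, y⁆ ^ m) a :=
      (commute_commutatorElement hN h y a).pow_left m
    have swap : h ^ k * y = ⁅h, y⁆ ^ k * (y * h ^ k) := by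
      rw [← commutatorElement_pow_left hN, commutatorElement_def]
      group
    calc (y * h) ^ (k + 1) = ⁅h, y⁆ ^ k.choose 2 * (y ^ k * (h ^ k * y) * h) := by
          rw [pow_succ, ih]
          simp only [mul_assoc]
      _ = ⁅h, y⁆ ^ k.choose 2 * ⁅h, y⁆ ^ k * (y ^ (k + 1) * h ^ (k + 1)) := by
          rw [swap, ← mul_assoc (y ^ k), ← (comm_pow k (y ^ k)).eq]
          simp only [pow_succ, mul_assoc]
      _ = ⁅h, y⁆ ^ (k + 1).choose 2 * (y ^ (k + 1) * h ^ (k + 1)) := by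
          rw [← pow_add, Nat.choose_succ_succ' k 1, Nat.choose_one_right, add_comm]

end CentralCommutators

section OrderOf

variable {N : Type*} [Group N]

theorem orderOf_pow_lt_of_prime_dvd [Finite N] {x : N} {q : ℕ} (hq : q.Prime)
    (hqx : q ∣ orderOf x) : orderOf (x ^ q) < orderOf x := by
  rw [orderOf_pow_of_dvd hq.ne_zero hqx]
  exact Nat.div_lt_self (orderOf_pos x) hq.one_lt

theorem exists_orderOf_eq_pow_succ [Finite N] {x : N} {p : ℕ} (hx : x ≠ 1)
    (hp : ∀ q : ℕ, q.Prime → q ∣ orderOf x → q = p) : ∃ b, orderOf x = p ^ (b + 1) := by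
  have h := Nat.eq_prime_pow_of_unique_prime_dvd (orderOf_pos x).ne' (hp _)
  obtain ⟨b, hb⟩ := Nat.exists_eq_succ_of_ne_zero
    (n := (orderOf x).primeFactorsList.length) (fun h₀ => hx <| by
      rwa [h₀, pow_zero, orderOf_eq_one_iff] at h)
  exact ⟨b, by rwa [hb] at h⟩

theorem zpowers_eq_zpowers_pow_of_orderOf_eq_prime {x c : N} {p b : ℕ} (hp : p.Prime)
    (hx : orderOf x = p ^ (b + 1)) (hc : orderOf c = p) (hcx : c ∈ Subgroup.zpowers x) :
    Subgroup.zpowers c = Subgroup.zpowers (x ^ p ^ b) := by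
  have order_pow : orderOf (x ^ p ^ b) = p := by
    rw [orderOf_pow_of_dvd (pow_ne_zero _ hp.ne_zero)
      (by rw [hx]; exact pow_dvd_pow _ b.le_succ), hx, pow_succ,
      Nat.mul_div_cancel_left _ (pow_pos hp.pos _)]
  have hle : Subgroup.zpowers c ≤ Subgroup.zpowers (x ^ p ^ b) := by
    rw [Subgroup.zpowers_le]
    obtain ⟨s, rfl⟩ := hcx
    have hs : x ^ (s * p) = 1 := by
      rw [zpow_mul, zpow_natCast]
      exact hc ▸ pow_orderOf_eq_one _
    rw [← orderOf_dvd_iff_zpow_eq_one, hx, pow_succ, Nat.cast_mul] at hs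
    obtain ⟨t, rfl⟩ := Int.dvd_of_mul_dvd_mul_right (by exact_mod_cast hp.ne_zero) hs
    exact ⟨t, by simp only [zpow_mul, zpow_natCast]⟩
  have : Finite (Subgroup.zpowers (x ^ p ^ b)) :=
    Nat.finite_of_card_ne_zero (by rw [Nat.card_zpowers, order_pow]; exact hp.ne_zero)
  exact Subgroup.eq_of_le_of_card_ge hle (by rw [Nat.card_zpowers, Nat.card_zpowers, order_pow, hc])

theorem eq_sq_of_orderOf_eq_four {x c : N} (hx : orderOf x = 4) (hc : orderOf c = 2)
    (hcx : c ∈ Subgroup.zpowers x) : c = x ^ 2 := by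
  have hmem : c ∈ Subgroup.zpowers (x ^ 2) := by
    have h := zpowers_eq_zpowers_pow_of_orderOf_eq_prime (b := 1) Nat.prime_two hx hc hcx
    rw [pow_one] at h
    exact h ▸ Subgroup.mem_zpowers c
  have hx2 : (x ^ 2) ^ 2 = 1 := by rw [← pow_mul, ← pow_orderOf_eq_one x, hx]
  obtain ⟨s, rfl⟩ := hmem
  rcases Int.even_or_odd' s with ⟨k, rfl | rfl⟩
  · simp [zpow_mul, zpow_ofNat, hx2] at hc
  · simp [zpow_add, zpow_mul, zpow_ofNat, hx2]

end OrderOf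

section Dedekind

open scoped commutatorElement

variable {N : Type*} [Group N]

theorem orderOf_commutatorElement_comm (g y : N) : orderOf ⁅y, g⁆ = orderOf ⁅g, y⁆ := by
  rw [← commutatorElement_inv, orderOf_inv]

theorem commutatorElement_mem_zpowers_right (hN : ∀ K : Subgroup N, K.Normal) (g y : N) :
    ⁅g, y⁆ ∈ Subgroup.zpowers y :=
  mul_mem ((hN _).conj_mem y (Subgroup.mem_zpowers y) g) (inv_mem (Subgroup.mem_zpowers y))

theorem commutatorElement_mem_zpowers_left (hN : ∀ K : Subgroup N, K.Normal) (g y : N) :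
    ⁅g, y⁆ ∈ Subgroup.zpowers g := by
  rw [← commutatorElement_inv]
  exact inv_mem (commutatorElement_mem_zpowers_right hN y g)

-- Conjugations act on the normal subgroup `⟨y⟩` as power maps, which commute with each other.
theorem commutator_le_center_of_forall_normal (hN : ∀ K : Subgroup N, K.Normal) :
    commutator N ≤ Subgroup.center N := by
  rw [commutator_def, Subgroup.commutator_le]
  intro g _ h _
  rw [Subgroup.mem_center_iff]
  intro y
  obtain ⟨s, hs : y ^ s = g⁻¹ * y * g⁻¹⁻¹⟩ := (hN _).conj_mem y (Subgroup.mem_zpowers y) g⁻¹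
  obtain ⟨t, ht : y ^ t = h⁻¹ * y * h⁻¹⁻¹⟩ := (hN _).conj_mem y (Subgroup.mem_zpowers y) h⁻¹
  have conj_comm : h⁻¹ * (g⁻¹ * y * g⁻¹⁻¹) * h⁻¹⁻¹ = g⁻¹ * (h⁻¹ * y * h⁻¹⁻¹) * g⁻¹⁻¹ := by
    rw [← hs, ← ht, ← conj_zpow, ← conj_zpow, ← hs, ← ht, zpow_comm]
  calc y * ⁅g, h⁆ = g * h * (h⁻¹ * (g⁻¹ * y * g⁻¹⁻¹) * h⁻¹⁻¹) * g⁻¹ * h⁻¹ := by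
        rw [commutatorElement_def]
        group
    _ = ⁅g, h⁆ * y := by
        rw [conj_comm, commutatorElement_def]
        group

theorem dvd_pow_sub_mul_choose_two {p a b : ℕ} (hp : p.Prime) (hba : b ≤ a)
    (h : ¬(p = 2 ∧ a = 1 ∧ b = 1)) : p ∣ p ^ (a - b) * (p ^ b).choose 2 := by
  rcases hba.lt_or_eq with hlt | rfl
  · exact (dvd_pow_self p (by omega)).mul_right _
  rw [Nat.sub_self, pow_zero, one_mul]
  rcases Nat.eq_zero_or_pos b with rfl | hb
  · simp
  have two_mul_choose : 2 * (p ^ b).choose 2 = p ^ b * (p ^ b - 1) := by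
    rw [Nat.choose_two_right, Nat.mul_div_cancel' (Nat.even_mul_pred_self _).two_dvd]
  by_cases hp2 : p = 2
  · subst hp2
    obtain ⟨c, rfl⟩ : ∃ c, b = c + 2 := ⟨b - 2, by omega⟩
    refine Nat.dvd_of_mul_dvd_mul_left two_pos ?_
    rw [two_mul_choose, pow_succ, pow_succ, mul_assoc _ 2 2]
    exact (dvd_mul_left _ _).mul_right _
  · refine ((Nat.coprime_primes hp Nat.prime_two).mpr hp2).dvd_of_dvd_mul_left ?_
    rw [two_mul_choose]
    exact (dvd_pow_self p hb.ne').mul_right _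

theorem exists_mul_pow_pow_eq_one (hN : commutator N ≤ Subgroup.center N) {g y : N} {p a b : ℕ}
    (hp : p.Prime) (hc : orderOf ⁅g, y⁆ = p) (hcy : ⁅g, y⁆ ∈ Subgroup.zpowers y)
    (hcg : ⁅g, y⁆ ∈ Subgroup.zpowers g) (hy : orderOf y = p ^ (b + 1))
    (hg : orderOf g = p ^ (a + 1)) (hba : b ≤ a) (h : ¬(p = 2 ∧ a = 1 ∧ b = 1)) :
    ∃ t : ℕ, (y * g ^ t) ^ p ^ b = 1 := by
  have inv_mem_zpowers : (y ^ p ^ b)⁻¹ ∈ Subgroup.zpowers (g ^ p ^ a) := by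
    rw [← zpowers_eq_zpowers_pow_of_orderOf_eq_prime hp hg hc hcg,
      zpowers_eq_zpowers_pow_of_orderOf_eq_prime hp hy hc hcy]
    exact inv_mem (Subgroup.mem_zpowers _)
  have hfin : IsOfFinOrder (g ^ p ^ a) :=
    (orderOf_pos_iff.mp (by rw [hg]; exact pow_pos hp.pos _)).pow
  obtain ⟨s, hs : (g ^ p ^ a) ^ s = (y ^ p ^ b)⁻¹⟩ :=
    hfin.mem_powers_iff_mem_zpowers.mpr inv_mem_zpowers
  have commutator_pow : ⁅g, y⁆ ^ (p ^ (a - b) * s * (p ^ b).choose 2) = 1 := by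
    rw [← orderOf_dvd_iff_pow_eq_one, hc, mul_right_comm]
    exact (dvd_pow_sub_mul_choose_two hp hba h).mul_right s
  refine ⟨p ^ (a - b) * s, ?_⟩
  have exponent_eq : p ^ (a - b) * s * p ^ b = p ^ a * s := by
    rw [mul_right_comm, ← pow_add, Nat.sub_add_cancel hba]
  rw [mul_pow_eq_pow_choose_two_mul hN, commutatorElement_pow_left hN, ← pow_mul, commutator_pow,
    one_mul, ← pow_mul, exponent_eq, pow_mul, hs, mul_inv_cancel]

/-- A noncommuting pair of elements with the least possible product of orders. -/
structure IsMinimalNoncommuting (g y : N) : Prop where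
  commutator_ne_one : ⁅g, y⁆ ≠ 1
  le_of_ne_one : ∀ g' y' : N, ⁅g', y'⁆ ≠ 1 → orderOf g * orderOf y ≤ orderOf g' * orderOf y'

namespace IsMinimalNoncommuting

variable {g y : N}

theorem symm (h : IsMinimalNoncommuting g y) : IsMinimalNoncommuting y g where
  commutator_ne_one h₁ := h.commutator_ne_one <| by rw [← commutatorElement_inv, h₁, inv_one]
  le_of_ne_one g' y' hne := by rw [mul_comm]; exact h.le_of_ne_one g' y' hne

variable [Finite N]

theorem exists_of_commutator_ne_one {a b : N} (hab : ⁅a, b⁆ ≠ 1) :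
    ∃ g y : N, IsMinimalNoncommuting g y := by
  obtain ⟨⟨g, y⟩, hgy, hmin⟩ := Set.exists_min_image {x : N × N | ⁅x.1, x.2⁆ ≠ 1}
    (fun x => orderOf x.1 * orderOf x.2) (Set.toFinite _) ⟨(a, b), hab⟩
  exact ⟨g, y, hgy, fun g' y' h => hmin (g', y') h⟩

theorem orderOf_le (h : IsMinimalNoncommuting g y) {y' : N} (hy' : ⁅g, y'⁆ ≠ 1) :
    orderOf y ≤ orderOf y' :=
  Nat.le_of_mul_le_mul_left (h.le_of_ne_one g y' hy') (orderOf_pos g)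

theorem eq_orderOf_commutator (h : IsMinimalNoncommuting g y)
    (hN : commutator N ≤ Subgroup.center N) {q : ℕ} (hq : q.Prime) (hqy : q ∣ orderOf y) :
    q = orderOf ⁅g, y⁆ := by
  have hpow : ⁅g, y⁆ ^ q = 1 := by
    by_contra hne
    rw [← commutatorElement_pow_right hN] at hne
    exact (h.orderOf_le hne).not_gt (orderOf_pow_lt_of_prime_dvd hq hqy)
  have : Fact q.Prime := ⟨hq⟩
  exact (orderOf_eq_prime hpow h.commutator_ne_one).symm

theorem exists_orderOf_eq_pow (h : IsMinimalNoncommuting g y)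
    (hN : commutator N ≤ Subgroup.center N) :
    (orderOf ⁅g, y⁆).Prime ∧ ∃ b, orderOf y = orderOf ⁅g, y⁆ ^ (b + 1) := by
  have hy : y ≠ 1 := by
    rintro rfl
    exact h.commutator_ne_one (commutatorElement_one_right g)
  have hprime := Nat.minFac_prime (mt orderOf_eq_one_iff.mp hy)
  refine ⟨?_, exists_orderOf_eq_pow_succ hy fun q hq hqy => h.eq_orderOf_commutator hN hq hqy⟩
  rwa [← h.eq_orderOf_commutator hN hprime (Nat.minFac_dvd _)]

theorem orderOf_eq_of_orderOf_le (h : IsMinimalNoncommuting g y)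
    (hN : ∀ K : Subgroup N, K.Normal) (hle : orderOf y ≤ orderOf g) :
    orderOf ⁅g, y⁆ = 2 ∧ orderOf g = 4 ∧ orderOf y = 4 := by
  have hN' := commutator_le_center_of_forall_normal hN
  obtain ⟨hp, b, hb⟩ := h.exists_orderOf_eq_pow hN'
  obtain ⟨-, a, ha⟩ := h.symm.exists_orderOf_eq_pow hN'
  rw [orderOf_commutatorElement_comm] at ha
  set p := orderOf ⁅g, y⁆ with hc
  have hba : b ≤ a := by
    rw [ha, hb, Nat.pow_le_pow_iff_right hp.one_lt] at hle
    omega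
  suffices h4 : p = 2 ∧ a = 1 ∧ b = 1 by
    obtain ⟨hp2, rfl, rfl⟩ := h4
    rw [ha, hb, hp2]
    norm_num
  by_contra h4
  obtain ⟨t, ht⟩ := exists_mul_pow_pow_eq_one hN' hp hc.symm
    (commutatorElement_mem_zpowers_right hN g y) (commutatorElement_mem_zpowers_left hN g y)
    hb ha hba h4
  have hne : ⁅g, y * g ^ t⁆ ≠ 1 := by
    rw [commutatorElement_mul_right hN', commutatorElement_pow_right hN', commutatorElement_self,
      one_pow, mul_one]
    exact h.commutator_ne_one
  have hlt : p ^ b < p ^ (b + 1) := Nat.pow_lt_pow_right hp.one_lt b.lt_succ_self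
  have := h.orderOf_le hne
  have := orderOf_le_of_pow_eq_one (pow_pos hp.pos b) ht
  omega

theorem commutator_eq_sq (h : IsMinimalNoncommuting g y) (hN : ∀ K : Subgroup N, K.Normal) :
    ⁅g, y⁆ = g ^ 2 ∧ ⁅g, y⁆ = y ^ 2 ∧ orderOf y = 4 := by
  obtain ⟨hc, hg, hy⟩ : orderOf ⁅g, y⁆ = 2 ∧ orderOf g = 4 ∧ orderOf y = 4 := by
    rcases le_total (orderOf y) (orderOf g) with hle | hle
    · exact h.orderOf_eq_of_orderOf_le hN hle
    · obtain ⟨hc, hy, hg⟩ := h.symm.orderOf_eq_of_orderOf_le hN hle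
      exact ⟨by rwa [orderOf_commutatorElement_comm] at hc, hg, hy⟩
  exact ⟨eq_sq_of_orderOf_eq_four hg hc (commutatorElement_mem_zpowers_left hN g y),
    eq_sq_of_orderOf_eq_four hy hc (commutatorElement_mem_zpowers_right hN g y), hy⟩

end IsMinimalNoncommuting

end Dedekind

namespace EveryCircSubgroupIsLeftIdeal

open scoped commutatorElement

variable {N : Type*} [Group N]

theorem mul_self_eq_one_of_conj_eq_inv (H : EveryCircSubgroupIsLeftIdeal N) {g y : N}
    (hg : g ^ 2 ∈ Subgroup.center N) (hy : g * y * g⁻¹ = y⁻¹) : y * y = 1 := by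
  have hN := commutator_le_center_of_forall_normal H.normal
  set C := Subgroup.centralizer {g} with hC
  have mem_C {a : N} : a ∈ C ↔ ⁅g, a⁆ = 1 := by
    rw [hC, Subgroup.mem_centralizer_singleton_iff, commutatorElement_eq_one_iff_mul_comm, eq_comm]
  have commutator_le : commutator N ≤ C := hN.trans (Subgroup.center_le_centralizer _)
  have sq_mem (a : N) : a ^ 2 ∈ C := by
    rw [mem_C, commutatorElement_pow_right hN, ← commutatorElement_pow_left hN,
      commutatorElement_eq_one_iff_mul_comm]
    exact (Subgroup.mem_center_iff.mp hg a).symm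
  by_cases hyC : y ∈ C
  · rw [Subgroup.mem_centralizer_singleton_iff] at hyC
    rwa [← hyC, mul_inv_cancel_right, eq_inv_iff_mul_eq_one] at hy
  obtain ⟨χ, hχy, -⟩ := exists_character_of_notMem Nat.prime_two commutator_le sq_mem hyC
  let T : ZModTwist N 2 :=
    { char := χ
      aut := MulAut.conj g
      aut_pow := by
        ext a
        rw [← map_pow, MulAut.conj_apply, MulAut.one_apply, mul_inv_eq_iff_eq_mul,
          Subgroup.mem_center_iff.mp hg a]
      char_aut a := by simp [mul_comm (χ g)] }
  exact H.mul_self_eq_one (T := T) hχy hy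

protected theorem mul_comm [Finite N] (H : EveryCircSubgroupIsLeftIdeal N) (a b : N) :
    a * b = b * a := by
  have hN := commutator_le_center_of_forall_normal H.normal
  rw [← commutatorElement_eq_one_iff_mul_comm]
  by_contra hab
  obtain ⟨g, y, hgy⟩ := IsMinimalNoncommuting.exists_of_commutator_ne_one hab
  obtain ⟨hg, hy, order_y⟩ := hgy.commutator_eq_sq H.normal
  have hg_center : g ^ 2 ∈ Subgroup.center N := hg ▸ Subgroup.mem_center_iff.mpr fun a =>
    (commute_commutatorElement hN g y a).symm
  have conj_eq : g * y * g⁻¹ = y⁻¹ := by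
    rw [commutatorElement_def, mul_inv_eq_iff_eq_mul] at hy
    rw [hy, eq_inv_iff_mul_eq_one, ← pow_succ, ← pow_succ, ← pow_orderOf_eq_one y, order_y]
  have hle := orderOf_le_of_pow_eq_one two_pos <|
    (sq y).trans (H.mul_self_eq_one_of_conj_eq_inv hg_center conj_eq)
  omega

end EveryCircSubgroupIsLeftIdeal

theorem exists_character_of_range_powMonoidHom_le {N : Type*} [CommGroup N] {p : ℕ} (hp : p.Prime)
    {K : Subgroup N} (hK : (powMonoidHom p : N →* N).range ≤ K) {y : N} (hy : y ∉ K) :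
    ∃ χ : N →* Multiplicative (ZMod p), χ y = .ofAdd 1 ∧ K ≤ χ.ker := by
  refine exists_character_of_notMem hp ?_ (fun a => hK ⟨a, rfl⟩) hy
  rw [commutator_def, Subgroup.commutator_le]
  intro a _ b _
  rw [commutatorElement_eq_one_iff_mul_comm.mpr (mul_comm a b)]
  exact K.one_mem

theorem exists_notMem_range_powMonoidHom {N : Type*} [CommGroup N] [Finite N] {p : ℕ}
    (hp : p.Prime) (hN : p ∣ Nat.card N) : ∃ y : N, y ∉ (powMonoidHom p : N →* N).range := by
  have : Fact p.Prime := ⟨hp⟩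
  obtain ⟨x, hx⟩ := exists_prime_orderOf_dvd_card' p hN
  by_contra! hsurj
  have hinj : Function.Injective (powMonoidHom p : N →* N) :=
    Finite.injective_iff_surjective.mpr hsurj
  have hx_one : x = 1 := hinj (by simp [← hx, pow_orderOf_eq_one])
  exact hp.ne_one (by rw [← hx, hx_one, orderOf_one])

/-- The twist inverting every element, available for characters of order two. -/
def ZModTwist.inversion {N : Type*} [CommGroup N] (χ : N →* Multiplicative (ZMod 2)) :
    ZModTwist N 2 where
  char := χ
  aut := MulEquiv.inv N
  aut_pow := by ext a; exact inv_inv a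
  char_aut a := by
    have inv_eq_self (t : Multiplicative (ZMod 2)) : t⁻¹ = t := by decide +revert
    exact (map_inv χ a).trans (inv_eq_self _)

theorem disjoint_zpowers_of_orderOf_eq_prime {N : Type*} [Group N] [Finite N] {p : ℕ} {y z : N}
    (hp : p.Prime) (hy : orderOf y = p) (hyz : y ∉ Subgroup.zpowers z) :
    Disjoint (Subgroup.zpowers y) (Subgroup.zpowers z) := by
  have card_dvd := Subgroup.card_dvd_of_le
    (inf_le_left : Subgroup.zpowers y ⊓ Subgroup.zpowers z ≤ _)
  rw [Nat.card_zpowers, hy, Nat.dvd_prime hp] at card_dvd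
  rcases card_dvd with h | h
  · exact disjoint_iff.mpr (Subgroup.card_eq_one.mp h)
  · have inf_eq : Subgroup.zpowers y ⊓ Subgroup.zpowers z = Subgroup.zpowers y :=
      Subgroup.eq_of_le_of_card_ge inf_le_left (by rw [h, Nat.card_zpowers, hy])
    exact absurd (inf_eq_left.mp inf_eq (Subgroup.mem_zpowers y)) hyz

theorem card_eq_prime_sq_of_closure_pair_eq_top {N : Type*} [CommGroup N] [Finite N] {p : ℕ}
    {y z : N} (hp : p.Prime) (hy : orderOf y = p) (hz : orderOf z = p)
    (hyz : y ∉ Subgroup.zpowers z) (htop : Subgroup.closure {y, z} = ⊤) :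
    Nat.card N = p ^ 2 := by
  have hcompl : Subgroup.IsComplement' (Subgroup.zpowers y) (Subgroup.zpowers z) := by
    refine Subgroup.isComplement'_of_disjoint_and_mul_eq_univ
      (disjoint_zpowers_of_orderOf_eq_prime hp hy hyz) ?_
    rw [← Subgroup.mul_normal, Subgroup.zpowers_eq_closure, Subgroup.zpowers_eq_closure,
      ← Subgroup.closure_union, Set.singleton_union, htop, Subgroup.coe_top]
  rw [← hcompl.card_mul_card, Nat.card_zpowers, Nat.card_zpowers, hy, hz, sq]

section ElementOfMaximalOrder

variable {N : Type*} [CommGroup N] [Finite N] {y : N}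

theorem exists_pow_prime_eq_one_notMem_zpowers (hy : orderOf y = Monoid.exponent N)
    (hN : ¬ IsCyclic N) :
    ∃ p : ℕ, p.Prime ∧ ∃ z : N, z ^ p = 1 ∧ z ∉ Subgroup.zpowers y := by
  set C := Subgroup.zpowers y
  have card_ne_one : Nat.card (N ⧸ C) ≠ 1 := fun h =>
    hN (isCyclic_iff_exists_zpowers_eq_top.mpr ⟨y, Subgroup.index_eq_one.mp h⟩)
  obtain ⟨p, hp, hp_dvd⟩ := Nat.exists_prime_and_dvd card_ne_one
  have : Fact p.Prime := ⟨hp⟩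
  obtain ⟨x', hx'⟩ := exists_prime_orderOf_dvd_card' p hp_dvd
  obtain ⟨x, rfl⟩ := QuotientGroup.mk_surjective x'
  have x_notMem : x ∉ C := fun h => by
    rw [(QuotientGroup.eq_one_iff x).mpr h, orderOf_one] at hx'
    exact hp.ne_one hx'.symm
  obtain ⟨k, hk⟩ := Subgroup.mem_zpowers_iff.mp <| show x ^ p ∈ C by
    rw [← QuotientGroup.eq_one_iff, QuotientGroup.mk_pow, ← hx', pow_orderOf_eq_one]
  obtain ⟨d, hd⟩ : p ∣ Monoid.exponent N :=
    hx' ▸ (orderOf_map_dvd (QuotientGroup.mk' C) x).trans (Monoid.order_dvd_exponent x)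
  have d_ne_zero : (d : ℤ) ≠ 0 := by
    rintro h
    rw [Nat.cast_eq_zero.mp h, mul_zero] at hd
    exact Monoid.exponent_ne_zero_of_finite hd
  have y_zpow : y ^ (k * d) = 1 := by
    rw [zpow_mul, zpow_natCast, hk, ← pow_mul, ← hd, Monoid.pow_exponent_eq_one]
  obtain ⟨j, rfl⟩ : (p : ℤ) ∣ k := by
    rw [← orderOf_dvd_iff_zpow_eq_one, hy, hd, Nat.cast_mul] at y_zpow
    exact Int.dvd_of_mul_dvd_mul_right d_ne_zero y_zpow
  refine ⟨p, hp, x / y ^ j, ?_, fun h => x_notMem ?_⟩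
  · rw [div_pow, ← hk, ← zpow_natCast, ← zpow_mul, mul_comm j, div_self']
  · simpa using mul_mem h (Subgroup.zpow_mem_zpowers y j)

theorem notMem_zpowers_sup_range_powMonoidHom (hy : orderOf y = Monoid.exponent N) {p : ℕ}
    (hp : p.Prime) {z : N} (hz : z ^ p = 1) (hzy : z ∉ Subgroup.zpowers y) :
    y ∉ Subgroup.zpowers z ⊔ (powMonoidHom p : N →* N).range := by
  have z_ne_one : z ≠ 1 := fun h => hzy (h ▸ one_mem _)
  have : Fact p.Prime := ⟨hp⟩
  have orderOf_z : orderOf z = p := orderOf_eq_prime hz z_ne_one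
  obtain ⟨d, hd⟩ : p ∣ Monoid.exponent N := orderOf_z ▸ Monoid.order_dvd_exponent z
  have d_pos : 0 < d :=
    Nat.pos_of_mul_pos_left (hd ▸ Nat.pos_of_ne_zero Monoid.exponent_ne_zero_of_finite)
  rintro h
  obtain ⟨c, hc, _, ⟨x, rfl⟩, y_eq⟩ := Subgroup.mem_sup.mp h
  have y_pow : y ^ d = c ^ d := by
    rw [← y_eq, mul_pow, powMonoidHom_apply, ← pow_mul, ← hd, Monoid.pow_exponent_eq_one, mul_one]
  have y_pow_eq_one : y ^ d = 1 :=
    Subgroup.disjoint_def.mp (disjoint_zpowers_of_orderOf_eq_prime hp orderOf_z hzy)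
      (y_pow ▸ pow_mem hc d) (Subgroup.npow_mem_zpowers y d)
  have : p * d ≤ d := hd ▸ hy ▸ orderOf_le_of_pow_eq_one d_pos y_pow_eq_one
  exact absurd this (not_le.mpr (lt_mul_of_one_lt_left d_pos hp.one_lt))

end ElementOfMaximalOrder

namespace EveryCircSubgroupIsLeftIdeal

open ZModTwist Multiplicative

variable {N : Type*} [CommGroup N]

theorem closure_pair_eq_top (H : EveryCircSubgroupIsLeftIdeal N) {p : ℕ} (hp : p.Prime)
    (hN : ∀ a : N, a ^ p = 1) {y z : N} (hy : y ∉ Subgroup.zpowers z)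
    (hz : z ∉ Subgroup.zpowers y) : Subgroup.closure {y, z} = ⊤ := by
  have range_le (K : Subgroup N) : (powMonoidHom p : N →* N).range ≤ K := by
    rintro _ ⟨a, rfl⟩
    rw [powMonoidHom_apply, hN]
    exact K.one_mem
  by_contra hne
  obtain ⟨x, hx⟩ := SetLike.exists_not_mem_of_ne_top _ hne rfl
  obtain ⟨χ, χ_x, closure_le⟩ := exists_character_of_range_powMonoidHom_le hp (range_le _) hx
  obtain ⟨τ, τ_y, zpowers_le⟩ := exists_character_of_range_powMonoidHom_le hp (range_le _) hy
  have χ_y : χ y = 1 := closure_le (Subgroup.subset_closure (by simp))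
  have χ_z : χ z = 1 := closure_le (Subgroup.subset_closure (by simp))
  have τ_z : τ z = 1 := zpowers_le (Subgroup.mem_zpowers z)
  have y_mul_z_mem := H.aut_mem_zpowers (T := transvection χ τ z (hN z) χ_z τ_z) χ_x χ_y
  have aut_y : transvectionAut τ z (hN z) τ_z y = y * z := by
    simpa using transvectionAut_zpow_apply (hN z) τ_z (b := y) (j := 1) (by simpa using τ_y) 1
  rw [transvection, aut_y, Subgroup.mul_mem_cancel_left _ (Subgroup.mem_zpowers y)] at y_mul_z_mem
  exact hz y_mul_z_mem

variable [Finite N]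

theorem sq_eq_one_of_even_card (H : EveryCircSubgroupIsLeftIdeal N) (hN : Even (Nat.card N))
    (a : N) : a ^ 2 = 1 := by
  obtain ⟨y, hy⟩ := exists_notMem_range_powMonoidHom (N := N) Nat.prime_two hN.two_dvd
  obtain ⟨χ, χ_y, -⟩ := exists_character_of_range_powMonoidHom_le Nat.prime_two le_rfl hy
  have sq_eq_one {b : N} (hb : χ b = ofAdd 1) : b ^ 2 = 1 := by
    rw [sq]
    exact H.mul_self_eq_one (T := inversion χ) hb rfl
  rcases (by decide : ∀ t : Multiplicative (ZMod 2), t = 1 ∨ t = ofAdd 1) (χ a) with ha | ha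
  · have hay := sq_eq_one (b := a * y) (by rw [map_mul, ha, one_mul, χ_y])
    rwa [mul_pow, sq_eq_one χ_y, mul_one] at hay
  · exact sq_eq_one ha

theorem card_eq_two_or_four_of_even_card (H : EveryCircSubgroupIsLeftIdeal N)
    (hN : Even (Nat.card N)) : Nat.card N = 2 ∨ Nat.card N = 4 := by
  have sq_eq_one := H.sq_eq_one_of_even_card hN
  have orderOf_eq {a : N} (ha : a ≠ 1) : orderOf a = 2 := orderOf_eq_prime (sq_eq_one a) ha
  have : Nontrivial N := Finite.one_lt_card_iff_nontrivial.mp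
    (Nat.le_of_dvd Nat.card_pos hN.two_dvd)
  obtain ⟨y, hy⟩ := exists_ne (1 : N)
  by_cases htop : Subgroup.zpowers y = ⊤
  · left
    rw [← Subgroup.card_top, ← htop, Nat.card_zpowers, orderOf_eq hy]
  · right
    obtain ⟨z, hzy⟩ := SetLike.exists_not_mem_of_ne_top _ htop rfl
    have hz : z ≠ 1 := fun h => hzy (h ▸ one_mem _)
    have hdisj := disjoint_zpowers_of_orderOf_eq_prime Nat.prime_two (orderOf_eq hz) hzy
    have hyz : y ∉ Subgroup.zpowers z := fun h =>
      hy (Subgroup.disjoint_def.mp hdisj h (Subgroup.mem_zpowers y))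
    exact card_eq_prime_sq_of_closure_pair_eq_top Nat.prime_two (orderOf_eq hy) (orderOf_eq hz) hyz
      (H.closure_pair_eq_top Nat.prime_two sq_eq_one hyz hzy)

theorem nonempty_mulEquiv_of_even_card (H : EveryCircSubgroupIsLeftIdeal N)
    (hN : Even (Nat.card N)) :
    Nonempty (N ≃* Multiplicative (ZMod 2)) ∨ Nonempty (N ≃* Multiplicative (ZMod 2 × ZMod 2)) := by
  rcases H.card_eq_two_or_four_of_even_card hN with hcard | hcard
  · exact .inl ⟨mulEquivOfPrimeCardEq hcard (by simp)⟩
  · have : Nontrivial N := Finite.one_lt_card_iff_nontrivial.mp (by omega)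
    have : IsKleinFour N :=
      { card_four := hcard
        exponent_two := (Monoid.exponent_eq_prime_iff Nat.prime_two).mpr fun _ ha =>
          orderOf_eq_prime (H.sq_eq_one_of_even_card hN _) ha }
    exact .inr IsKleinFour.nonempty_mulEquiv

theorem isCyclic_of_odd_card (H : EveryCircSubgroupIsLeftIdeal N) (hN : Odd (Nat.card N)) :
    IsCyclic N := by
  by_contra hcyc
  obtain ⟨y, hy⟩ := Monoid.exists_orderOf_eq_exponent (Monoid.ExponentExists.of_finite (G := N))
  obtain ⟨p, hp, z, hz, hzy⟩ := exists_pow_prime_eq_one_notMem_zpowers hy hcyc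
  obtain ⟨χ, χ_y, sup_le⟩ := exists_character_of_range_powMonoidHom_le hp le_sup_right
    (notMem_zpowers_sup_range_powMonoidHom hy hp hz hzy)
  have χ_z : χ z = 1 := sup_le (Subgroup.mem_sup_left (Subgroup.mem_zpowers z))
  have z_sq_mem := H.sq_mem_zpowers χ_y χ_z hz
  have orderOf_z : Odd (orderOf z) := hN.of_dvd_nat (orderOf_dvd_natCard z)
  obtain ⟨j, hj⟩ := orderOf_z.add_one
  have z_eq : z = (z ^ 2) ^ j := by
    rw [← pow_mul, two_mul, ← hj, pow_succ, pow_orderOf_eq_one, one_mul]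
  exact hzy (z_eq ▸ pow_mem z_sq_mem j)

end EveryCircSubgroupIsLeftIdeal

theorem exists_pow_modEq_one_of_prime_dvd_sub_one {p q k m : ℕ} (hp : p.Prime) (hq : q.Prime)
    (hqp : q ∣ p - 1) (hk : k ≠ 0) (hm : (p ^ k).Coprime m) :
    ∃ u : ℕ, u ^ q ≡ 1 [MOD p ^ k * m] ∧ u ≡ 1 [MOD m] ∧ ¬ u ≡ 1 [MOD p ^ k] := by
  have : Fact q.Prime := ⟨hq⟩
  have : NeZero (p ^ k) := ⟨pow_ne_zero k hp.ne_zero⟩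
  have q_dvd : q ∣ Nat.card (ZMod (p ^ k))ˣ := by
    rw [Nat.card_eq_fintype_card, ZMod.card_units_eq_totient]
    rw [← Nat.totient_prime hp] at hqp
    exact hqp.trans (Nat.totient_dvd_of_dvd (dvd_pow_self p hk))
  obtain ⟨v, hv⟩ := exists_prime_orderOf_dvd_card' q q_dvd
  obtain ⟨u, u_modEq_v, u_modEq_one⟩ := Nat.chineseRemainder hm (v : ZMod (p ^ k)).val 1
  have u_cast : (u : ZMod (p ^ k)) = v := by
    rw [(ZMod.natCast_eq_natCast_iff _ _ _).mpr u_modEq_v, ZMod.natCast_zmod_val]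
  refine ⟨u, (Nat.modEq_and_modEq_iff_modEq_mul hm).mp ⟨?_, ?_⟩, u_modEq_one, fun h => ?_⟩
  · rw [← ZMod.natCast_eq_natCast_iff, Nat.cast_pow, u_cast, ← Units.val_pow_eq_pow_val, ← hv,
      pow_orderOf_eq_one, Units.val_one, Nat.cast_one]
  · simpa using u_modEq_one.pow q
  · rw [← ZMod.natCast_eq_natCast_iff, u_cast, Nat.cast_one, Units.val_eq_one] at h
    rw [h, orderOf_one] at hv
    exact hq.ne_one hv.symm

theorem exists_mulAut_apply_eq_pow {N : Type*} [CommGroup N] {u q : ℕ} (hq : q ≠ 0)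
    (hu : ∀ x : N, x ^ u ^ q = x) : ∃ σ : MulAut N, (∀ x, σ x = x ^ u) ∧ σ ^ q = 1 := by
  have hpred : u ^ q = u * u ^ (q - 1) := (mul_pow_sub_one hq u).symm
  let σ : MulAut N :=
    { toFun x := x ^ u
      invFun x := x ^ u ^ (q - 1)
      left_inv x := by beta_reduce; rw [← pow_mul, ← hpred, hu]
      right_inv x := by beta_reduce; rw [← pow_mul, mul_comm, ← hpred, hu]
      map_mul' a b := mul_pow a b u }
  have σ_pow (i : ℕ) (x : N) : (σ ^ i) x = x ^ u ^ i := by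
    induction i with
    | zero => simp
    | succ i ih => rw [pow_succ', MulAut.mul_apply, ih, pow_succ, pow_mul]; rfl
  exact ⟨σ, fun x => rfl, MulEquiv.ext fun x => by rw [σ_pow, hu, MulAut.one_apply]⟩

theorem orderOf_pow_of_orderOf_eq_mul {N : Type*} [Monoid N] {g : N} {s t : ℕ} (hs : s ≠ 0)
    (hg : orderOf g = s * t) : orderOf (g ^ s) = t := by
  rw [orderOf_pow_of_dvd hs (hg ▸ dvd_mul_right s t), hg,
    Nat.mul_div_cancel_left t (Nat.pos_of_ne_zero hs)]

theorem notMem_range_powMonoidHom_of_orderOf_eq_card {N : Type*} [CommGroup N] [Finite N] {g : N}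
    (hg : orderOf g = Nat.card N) {q t : ℕ} (hq : q ∣ Nat.card N) (hqt : ¬ q ∣ t) :
    g ^ t ∉ (powMonoidHom q : N →* N).range := by
  rintro ⟨x, hx⟩
  obtain ⟨d, hd⟩ := hq
  have d_pos : 0 < d := Nat.pos_of_mul_pos_left (hd ▸ Nat.card_pos)
  have g_pow : g ^ (t * d) = 1 := by
    rw [pow_mul, ← hx, powMonoidHom_apply, ← pow_mul, ← hd, pow_card_eq_one']
  rw [← orderOf_dvd_iff_pow_eq_one, hg, hd] at g_pow
  exact hqt (Nat.dvd_of_mul_dvd_mul_right d_pos g_pow)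

namespace EveryCircSubgroupIsLeftIdeal

open ZModTwist Multiplicative

variable {N : Type*} [CommGroup N] [Finite N]

theorem modEq_one_of_pow_modEq_one (H : EveryCircSubgroupIsLeftIdeal N) {g : N} {q s m u : ℕ}
    (hg : orderOf g = Nat.card N) (hN : Nat.card N = s * m) (hcop : s.Coprime m) (hq : q.Prime)
    (hqm : q ∣ m) (u_pow : u ^ q ≡ 1 [MOD s * m]) (u_m : u ≡ 1 [MOD m]) : u ≡ 1 [MOD s] := by
  obtain ⟨s_ne_zero, m_ne_zero⟩ : s ≠ 0 ∧ m ≠ 0 :=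
    mul_ne_zero_iff.mp (hN ▸ (Nat.card_pos (α := N)).ne')
  have orderOf_w : orderOf (g ^ s) = m := orderOf_pow_of_orderOf_eq_mul s_ne_zero (hg.trans hN)
  have orderOf_a : orderOf (g ^ m) = s :=
    orderOf_pow_of_orderOf_eq_mul m_ne_zero (hg.trans (hN.trans (mul_comm s m)))
  have q_not_dvd : ¬ q ∣ s := fun h => hq.ne_one (Nat.eq_one_of_dvd_coprimes hcop h hqm)
  have w_notMem := notMem_range_powMonoidHom_of_orderOf_eq_card hg
    (hqm.trans (hN ▸ dvd_mul_left m s)) q_not_dvd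
  obtain ⟨χ, χ_w, -⟩ := exists_character_of_range_powMonoidHom_le hq le_rfl w_notMem
  obtain ⟨σ, σ_apply, σ_pow⟩ := exists_mulAut_apply_eq_pow (N := N) hq.ne_zero fun x => by
    simpa using pow_eq_pow_of_modEq u_pow (hN ▸ pow_card_eq_one')
  have char_σ (a : N) : χ (σ a) = χ a := by
    have pow_q : χ a ^ q = 1 := by rw [← toAdd_eq_zero, toAdd_pow, ZModModule.char_nsmul_eq_zero]
    simpa [σ_apply] using pow_eq_pow_of_modEq (u_m.of_dvd hqm) pow_q
  have σ_w : σ (g ^ s) = g ^ s := by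
    rw [σ_apply, pow_eq_pow_of_modEq u_m (orderOf_w ▸ pow_orderOf_eq_one (g ^ s)), pow_one]
  have σ_a : σ (g ^ m) = g ^ m := H.aut_eq_self_of_coprime (T := ⟨χ, σ, σ_pow, char_σ⟩) χ_w σ_w
    (by rwa [orderOf_a, orderOf_w])
  rw [σ_apply] at σ_a
  exact orderOf_a ▸ pow_eq_pow_iff_modEq.mp (by rw [σ_a, pow_one])

theorem not_prime_dvd_sub_one [IsCyclic N] (H : EveryCircSubgroupIsLeftIdeal N) {p q : ℕ}
    (hp : p.Prime) (hq : q.Prime) (hpN : p ∣ Nat.card N) (hqN : q ∣ Nat.card N) :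
    ¬ q ∣ p - 1 := by
  intro hqp
  obtain ⟨g, hg⟩ := IsCyclic.exists_ofOrder_eq_natCard (α := N)
  obtain ⟨k, m, hpm, hN⟩ :=
    Nat.exists_eq_pow_mul_and_not_dvd (Nat.card_pos (α := N)).ne' p hp.ne_one
  have hk : k ≠ 0 := by
    rintro rfl
    exact hpm (by simpa [hN] using hpN)
  have hcop : (p ^ k).Coprime m := (hp.coprime_iff_not_dvd.mpr hpm).pow_left k
  have hqm : q ∣ m := by
    have q_ne_p : q ≠ p := by
      rintro rfl
      exact absurd (Nat.le_of_dvd (Nat.sub_pos_of_lt hp.one_lt) hqp)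
        (not_le.mpr (Nat.sub_lt hp.pos one_pos))
    exact (((Nat.coprime_primes hq hp).mpr q_ne_p).pow_right k).dvd_of_dvd_mul_left (hN ▸ hqN)
  obtain ⟨u, u_pow, u_m, u_pk⟩ := exists_pow_modEq_one_of_prime_dvd_sub_one hp hq hqp hk hcop
  exact u_pk (H.modEq_one_of_pow_modEq_one hg hN hcop hq hqm u_pow u_m)

end EveryCircSubgroupIsLeftIdeal

namespace IsSkewBrace

variable {N : Type*} [Group N] {op : N → N → N}

theorem op_one (h : IsSkewBrace op) (a : N) : op a 1 = a := by
  have h_one := h.2 a 1 1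
  rw [mul_one, mul_assoc, left_eq_mul, inv_mul_eq_one] at h_one
  exact h_one.symm

theorem one_op (h : IsSkewBrace op) (a : N) : op 1 a = a := by
  obtain ⟨⟨-, e, he, -⟩, -⟩ := id h
  have e_eq_one : e = 1 := by rw [← h.op_one e, (he 1).1]
  exact e_eq_one ▸ (he a).1

theorem exists_op_eq_one (h : IsSkewBrace op) (a : N) : ∃ b, op b a = 1 := by
  obtain ⟨⟨-, e, he, hinv⟩, -⟩ := id h
  have e_eq_one : e = 1 := by rw [← h.op_one e, (he 1).1]
  obtain ⟨b, -, hb⟩ := hinv a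
  exact ⟨b, e_eq_one ▸ hb⟩

/-- The circle group `(N, ∘)` of a skew brace, as a copy of `N` carrying `∘` as multiplication. -/
def Circ (_ : IsSkewBrace op) : Type _ := N

/-- The identity map from `N` to the circle group. -/
def toCirc (h : IsSkewBrace op) : N ≃ h.Circ := Equiv.refl N

noncomputable instance (h : IsSkewBrace op) : Group h.Circ where
  mul := op
  one := (1 : N)
  inv a := (h.exists_op_eq_one a).choose
  mul_assoc := h.1.1
  one_mul := h.one_op
  mul_one := h.op_one
  inv_mul_cancel a := (h.exists_op_eq_one a).choose_spec

theorem toCirc_op (h : IsSkewBrace op) (a b : N) :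
    h.toCirc (op a b) = h.toCirc a * h.toCirc b := rfl

theorem toCirc_one (h : IsSkewBrace op) : h.toCirc 1 = 1 := rfl

/-- The gamma function `a ↦ γ_a` of a skew brace, as an action of the circle group on `(N, ·)`. -/
def gamma (h : IsSkewBrace op) : h.Circ →* Monoid.End N where
  toFun a := MonoidHom.mk' (fun b => (h.toCirc.symm a)⁻¹ * op (h.toCirc.symm a) b) fun b c => by
    rw [h.2, mul_assoc, mul_assoc]
  map_one' := MonoidHom.ext fun b => by
    change (1 : N)⁻¹ * op 1 b = b
    rw [h.one_op, inv_one, one_mul]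
  map_mul' a b := MonoidHom.ext fun c => by
    obtain ⟨a, rfl⟩ := h.toCirc.surjective a
    obtain ⟨b, rfl⟩ := h.toCirc.surjective b
    change (op a b)⁻¹ * op (op a b) c = a⁻¹ * op a (b⁻¹ * op b c)
    have op_op : op (op a b) c = op a b * a⁻¹ * op a (b⁻¹ * op b c) := by
      rw [h.1.1, ← h.2, mul_inv_cancel_left]
    rw [op_op, mul_assoc, inv_mul_cancel_left]

theorem gamma_toCirc_apply (h : IsSkewBrace op) (a b : N) :
    h.gamma (h.toCirc a) b = a⁻¹ * op a b := rfl

theorem op_eq_mul_gamma (h : IsSkewBrace op) (a b : N) :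
    op a b = a * h.gamma (h.toCirc a) b := by
  rw [gamma_toCirc_apply, mul_inv_cancel_left]

theorem gamma_pow_apply (h : IsSkewBrace op) {x : h.Circ} {b : N} {v : ℤ}
    (hv : h.gamma x b = b ^ v) (k : ℕ) : h.gamma (x ^ k) b = b ^ v ^ k := by
  induction k with
  | zero => simp
  | succ k ih =>
    rw [pow_succ, map_mul, Monoid.End.coe_mul, Function.comp_apply, hv, map_zpow, ih, ← zpow_mul,
      ← pow_succ]

theorem toCirc_pow (h : IsSkewBrace op) {x : N} {v : ℤ} (hv : h.gamma (h.toCirc x) x = x ^ v)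
    (k : ℕ) : h.toCirc x ^ k = h.toCirc (x ^ ∑ i ∈ Finset.range k, v ^ i) := by
  induction k with
  | zero => simp [toCirc_one]
  | succ k ih =>
    rw [pow_succ', ih, ← toCirc_op, h.op_eq_mul_gamma, map_zpow, hv, ← zpow_mul, ← zpow_one_add,
      geom_sum_succ, add_comm]

theorem card_dvd_pow_card_sub_one [Finite N] [IsCyclic N] (h : IsSkewBrace op) {x : h.Circ} {v : ℤ}
    (hv : ∀ b, h.gamma x b = b ^ v) : (Nat.card N : ℤ) ∣ v ^ Nat.card N - 1 := by
  have x_pow : x ^ Nat.card N = 1 := pow_card_eq_one' (G := h.Circ)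
  obtain ⟨g, hg⟩ := IsCyclic.exists_ofOrder_eq_natCard (α := N)
  have g_zpow := h.gamma_pow_apply (hv g) (Nat.card N)
  rw [x_pow, map_one, Monoid.End.coe_one, id_eq] at g_zpow
  rw [← hg, orderOf_dvd_iff_zpow_eq_one, hg, zpow_sub_one, ← g_zpow, mul_inv_cancel]

end IsSkewBrace

namespace IsCircSubgroup

variable {N : Type*} [Group N] {op : N → N → N} {S : Set N}

/-- A subgroup of `(N, ∘)`, as a subgroup of the circle group. -/
def toSubgroup (hS : IsCircSubgroup op S) (h : IsSkewBrace op) : Subgroup h.Circ where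
  carrier := h.toCirc.symm ⁻¹' S
  one_mem' := hS.1
  mul_mem' ha hb := hS.2.1 _ ha _ hb
  inv_mem' {a} ha := by
    obtain ⟨b, hb, hab, -⟩ := hS.2.2 _ ha
    exact (inv_eq_of_mul_eq_one_right (a := a) (b := h.toCirc b) hab) ▸ hb

theorem toCirc_mem_toSubgroup (hS : IsCircSubgroup op S) (h : IsSkewBrace op) {a : N} :
    h.toCirc a ∈ hS.toSubgroup h ↔ a ∈ S := .rfl

theorem op_mem_iff_left (hS : IsCircSubgroup op S) (h : IsSkewBrace op) {a b : N} (hb : b ∈ S) :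
    op a b ∈ S ↔ a ∈ S := by
  rw [← hS.toCirc_mem_toSubgroup h, ← hS.toCirc_mem_toSubgroup h, h.toCirc_op]
  exact Subgroup.mul_mem_cancel_right _ hb

theorem card_dvd_card [Finite N] (hS : IsCircSubgroup op S) (h : IsSkewBrace op) :
    Nat.card S ∣ Nat.card N :=
  (hS.toSubgroup h).card_subgroup_dvd_card

theorem toCirc_pow_card_eq_one [Finite N] (hS : IsCircSubgroup op S) (h : IsSkewBrace op) {x : N}
    (hx : x ∈ S) : h.toCirc x ^ Nat.card S = 1 :=
  orderOf_dvd_iff_pow_eq_one.mp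
    ((hS.toSubgroup h).orderOf_dvd_natCard ((hS.toCirc_mem_toSubgroup h).mpr hx))

end IsCircSubgroup

section ElementaryAbelian

variable {N : Type*} [Group N] {op : N → N → N}

theorem isLeftIdeal_bot (h : IsSkewBrace op) : IsLeftIdeal op ⊥ := by
  intro a b hb
  rw [Subgroup.mem_bot] at hb ⊢
  rw [hb, h.op_one, inv_mul_cancel]

theorem isLeftIdeal_of_index_eq_two (h : IsSkewBrace op) {I : Subgroup N} (hI : I.index = 2)
    (hcirc : IsCircSubgroup op (I : Set N)) : IsLeftIdeal op I := by
  intro a b hb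
  have op_mem : op a b ∈ I ↔ a ∈ I := hcirc.op_mem_iff_left h hb
  rw [Subgroup.mul_mem_iff_of_index_two hI, inv_mem_iff, op_mem]

theorem exists_subgroup_coe_eq_of_ncard_eq_two (hsq : ∀ x : N, x ^ 2 = 1) {S : Set N}
    (hS : S.ncard = 2) (one_mem : 1 ∈ S) : ∃ I : Subgroup N, (I : Set N) = S := by
  obtain ⟨s, hs, s_ne_one⟩ := Set.exists_ne_of_one_lt_ncard (hS ▸ one_lt_two) 1
  have S_finite : S.Finite := Set.finite_of_ncard_pos (by omega)
  refine ⟨Subgroup.zpowers s, Set.eq_of_subset_of_ncard_le ?_ ?_ S_finite⟩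
  · rintro _ ⟨k, rfl⟩
    rcases Int.even_or_odd' k with ⟨m, rfl | rfl⟩
    · simpa [zpow_mul, hsq] using one_mem
    · simpa [zpow_add, zpow_mul, hsq] using hs
  · rw [hS, ← Nat.card_coe_set_eq, SetLike.coe_sort_coe, Nat.card_zpowers,
      orderOf_eq_prime (hsq s) s_ne_one]

theorem everyCircSubgroupIsLeftIdeal_of_sq_eq_one [Finite N] (hsq : ∀ x : N, x ^ 2 = 1)
    (hN : Nat.card N ∣ 4) : EveryCircSubgroupIsLeftIdeal N := by
  intro op h S hS
  have card_dvd := hS.card_dvd_card h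
  rw [Nat.card_coe_set_eq] at card_dvd
  obtain card_S | card_S | ⟨card_S, card_N⟩ :
      S.ncard = 1 ∨ S.ncard = Nat.card N ∨ S.ncard = 2 ∧ Nat.card N = 4 := by
    have card_pos := Nat.card_pos (α := N)
    have card_le := Nat.le_of_dvd (by decide) hN
    interval_cases Nat.card N <;> have S_le := Nat.le_of_dvd (by decide) card_dvd <;>
      interval_cases S.ncard <;> simp_all
  · obtain ⟨s, rfl⟩ := Set.ncard_eq_one.mp card_S
    refine ⟨⊥, ?_, isLeftIdeal_bot h⟩
    rw [Subgroup.coe_bot, Set.mem_singleton_iff.mp hS.1]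
  · refine ⟨⊤, ?_, fun _ _ _ => Subgroup.mem_top _⟩
    rw [Subgroup.coe_top]
    exact (Set.eq_of_subset_of_ncard_le S.subset_univ (by rw [Set.ncard_univ, card_S])).symm
  · obtain ⟨I, rfl⟩ := exists_subgroup_coe_eq_of_ncard_eq_two hsq card_S hS.1
    refine ⟨I, rfl, isLeftIdeal_of_index_eq_two h ?_ hS⟩
    have card_mul := I.card_mul_index
    rw [← SetLike.coe_sort_coe, Nat.card_coe_set_eq, card_S, card_N] at card_mul
    omega

end ElementaryAbelian

section GeometricSums

theorem emultiplicity_geom_sum {p : ℕ} (hp : p.Prime) (hodd : Odd p) {v : ℤ} (hv : v ≠ 1)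
    (hpv : (p : ℤ) ∣ v - 1) (d : ℕ) :
    emultiplicity (p : ℤ) (∑ i ∈ Finset.range d, v ^ i) = emultiplicity p d := by
  have hp' : Prime (p : ℤ) := Nat.prime_iff_prime_int.mp hp
  have not_dvd : ¬ (p : ℤ) ∣ v := fun h =>
    hp'.not_isUnit (isUnit_of_dvd_one ((dvd_sub_right h).mp hpv))
  have hfin : FiniteMultiplicity (p : ℤ) (v - 1) :=
    Int.finiteMultiplicity_iff.mpr ⟨by simpa using hp.ne_one, sub_ne_zero.mpr hv⟩
  have lifting := Int.emultiplicity_pow_sub_pow hp hodd hpv not_dvd d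
  rw [one_pow, ← geom_sum_mul, emultiplicity_mul hp', add_comm] at lifting
  exact ENat.add_right_injective_of_ne_top (finiteMultiplicity_iff_emultiplicity_ne_top.mp hfin)
    lifting

theorem dvd_of_dvd_geom_sum {v : ℤ} {o d : ℕ}
    (ho : ∀ p : ℕ, p.Prime → p ∣ o → Odd p ∧ (p : ℤ) ∣ v - 1)
    (hsum : (o : ℤ) ∣ ∑ i ∈ Finset.range d, v ^ i) : o ∣ d := by
  rcases eq_or_ne v 1 with rfl | hv
  · simpa [Int.natCast_dvd_natCast] using hsum
  refine Nat.dvd_iff_prime_pow_dvd_dvd _ _ |>.mpr fun p k hp hk => ?_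
  rcases eq_or_ne k 0 with rfl | hk_ne
  · simp
  obtain ⟨hodd, hpv⟩ := ho p hp ((dvd_pow_self p hk_ne).trans hk)
  refine pow_dvd_of_le_emultiplicity ?_
  rw [← emultiplicity_geom_sum hp hodd hv hpv]
  exact le_emultiplicity_of_pow_dvd (dvd_trans (mod_cast hk) hsum)

theorem prime_dvd_sub_one_of_dvd_pow_sub_one {v : ℤ} {n p : ℕ} (hp : p.Prime) (hn : n ≠ 0)
    (hcop : n.Coprime (p - 1)) (h : (p : ℤ) ∣ v ^ n - 1) : (p : ℤ) ∣ v - 1 := by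
  have : Fact p.Prime := ⟨hp⟩
  have v_pow : (v : ZMod p) ^ n = 1 := by
    simpa [sub_eq_zero] using (ZMod.intCast_zmod_eq_zero_iff_dvd _ p).mpr h
  have v_ne_zero : (v : ZMod p) ≠ 0 := fun h₀ => by simp [h₀, hn] at v_pow
  have v_eq_one : (v : ZMod p) = 1 := by
    simpa [hcop.gcd_eq_one] using pow_gcd_eq_one.mpr ⟨v_pow, ZMod.pow_card_sub_one_eq_one v_ne_zero⟩
  rw [← ZMod.intCast_zmod_eq_zero_iff_dvd, Int.cast_sub, v_eq_one, Int.cast_one, sub_self]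

end GeometricSums

section CyclicOdd

theorem IsCircSubgroup.pow_card_eq_one {N : Type*} [Group N] [Finite N] [IsCyclic N]
    {op : N → N → N} {S : Set N} (hodd : Odd (Nat.card N))
    (hcop : ∀ p : ℕ, p.Prime → p ∣ Nat.card N → (Nat.card N).Coprime (p - 1))
    (hS : IsCircSubgroup op S) (h : IsSkewBrace op) {x : N} (hx : x ∈ S) :
    x ^ Nat.card S = 1 := by
  obtain ⟨v, hv⟩ := MonoidHom.map_cyclic (h.gamma (h.toCirc x))
  have card_dvd := h.card_dvd_pow_card_sub_one hv
  have x_zpow : x ^ ∑ i ∈ Finset.range (Nat.card S), v ^ i = 1 := by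
    rw [← h.toCirc.apply_eq_iff_eq, ← h.toCirc_pow (hv x), hS.toCirc_pow_card_eq_one h hx,
      h.toCirc_one]
  rw [← orderOf_dvd_iff_pow_eq_one]
  refine dvd_of_dvd_geom_sum (fun p hp hpx => ?_) (orderOf_dvd_iff_zpow_eq_one.mpr x_zpow)
  have hpN : p ∣ Nat.card N := hpx.trans (orderOf_dvd_natCard x)
  exact ⟨hodd.of_dvd_nat hpN, prime_dvd_sub_one_of_dvd_pow_sub_one hp Nat.card_pos.ne'
    (hcop p hp hpN) ((Int.natCast_dvd_natCast.mpr hpN).trans card_dvd)⟩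

variable {N : Type*} [CommGroup N] [Finite N] [IsCyclic N]

theorem coe_ker_powMonoidHom_eq_of_pow_card_eq_one {S : Set N} [Nonempty S]
    (hS : ∀ x ∈ S, x ^ Nat.card S = 1) :
    ((powMonoidHom (Nat.card S) : N →* N).ker : Set N) = S := by
  classical
  have := Fintype.ofFinite N
  have coe_ker : ((powMonoidHom (Nat.card S) : N →* N).ker : Set N) = {x | x ^ Nat.card S = 1} :=
    rfl
  have card_le := IsCyclic.card_pow_eq_one_le (α := N) (Nat.card_pos (α := S))
  rw [← Set.ncard_coe_finset, Finset.coe_filter_univ] at card_le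
  rw [coe_ker]
  exact (Set.eq_of_subset_of_ncard_le hS card_le (Set.toFinite _)).symm

theorem everyCircSubgroupIsLeftIdeal_of_isCyclic (hodd : Odd (Nat.card N))
    (hcop : ∀ p : ℕ, p.Prime → p ∣ Nat.card N → (Nat.card N).Coprime (p - 1)) :
    EveryCircSubgroupIsLeftIdeal N := by
  intro op h S hS
  have : Nonempty S := ⟨1, hS.1⟩
  refine ⟨(powMonoidHom (Nat.card S)).ker, coe_ker_powMonoidHom_eq_of_pow_card_eq_one
    fun x hx => hS.pow_card_eq_one hodd hcop h hx, fun a b hb => ?_⟩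
  rw [MonoidHom.mem_ker, powMonoidHom_apply] at hb ⊢
  rw [← h.gamma_toCirc_apply, ← map_pow, hb, map_one]

end CyclicOdd

/-- **Theorem 1.2 / Problem 3.6.** For a finite group `N`, every subgroup of `(N, ∘)` is a
left ideal of `(N, ·, ∘)` for all skew brace operations `∘` on `N`, if and only if `N` is
isomorphic to `C₂` or `C₂ × C₂`, or `N` is cyclic of odd order with `q ∤ p - 1` for all
prime divisors `p, q` of `|N|`. -/
theorem every_circ_subgroup_left_ideal_iff (N : Type*) [Group N] [Finite N] :
    (∀ op : N → N → N, IsSkewBrace op →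
      ∀ S : Set N, IsCircSubgroup op S →
        ∃ I : Subgroup N, (I : Set N) = S ∧ IsLeftIdeal op I) ↔
    (Nonempty (N ≃* Multiplicative (ZMod 2)) ∨
     Nonempty (N ≃* Multiplicative (ZMod 2 × ZMod 2)) ∨
     (IsCyclic N ∧ Odd (Nat.card N) ∧
      ∀ p q : ℕ, p.Prime → q.Prime → p ∣ Nat.card N → q ∣ Nat.card N → ¬ q ∣ p - 1)) := by
  change EveryCircSubgroupIsLeftIdeal N ↔ _
  constructor
  · intro H
    let : CommGroup N := { (inferInstance : Group N) with mul_comm := H.mul_comm }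
    rcases Nat.even_or_odd (Nat.card N) with hN | hN
    · exact or_assoc.mp (.inl (H.nonempty_mulEquiv_of_even_card hN))
    · have := H.isCyclic_of_odd_card hN
      exact .inr (.inr ⟨this, hN, fun p q => H.not_prime_dvd_sub_one⟩)
  · rintro (⟨⟨e⟩⟩ | ⟨⟨e⟩⟩ | ⟨hcyc, hodd, hpq⟩)
    · have sq_eq_one : ∀ t : Multiplicative (ZMod 2), t ^ 2 = 1 := by decide
      exact everyCircSubgroupIsLeftIdeal_of_sq_eq_one
        (fun x => e.injective (by rw [map_pow, map_one, sq_eq_one]))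
        (by simp [Nat.card_congr e.toEquiv])
    · have sq_eq_one : ∀ t : Multiplicative (ZMod 2 × ZMod 2), t ^ 2 = 1 := by decide
      exact everyCircSubgroupIsLeftIdeal_of_sq_eq_one
        (fun x => e.injective (by rw [map_pow, map_one, sq_eq_one]))
        (by simp [Nat.card_congr e.toEquiv])
    · let : CommGroup N := IsCyclic.commGroup
      exact everyCircSubgroupIsLeftIdeal_of_isCyclic hodd fun p hp hpN =>
        Nat.coprime_of_dvd fun q hq hqN => hpq p q hp hq hpN hqN
end

section
/- Let N be a finite group (written multiplicatively as (N,·)). If for every binary operation ∘ on N such that (N,·,∘) is a skew brace every subgroup of (N,∘) is a left ideal of (N,·,∘), then every subgroup of N is normal in N. -/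
section AlmostTrivial

variable {G : Type*} [Group G]

/-- The operation `a ∘ b = b * a` of the almost trivial skew brace on `G`, the skew brace whose
left ideals are the normal subgroups of `G`. It is kept as an operation on `G` itself, rather than
on `Gᵐᵒᵖ`, since `IsSkewBrace` compares two operations on the same type. -/
def almostTrivialOp (a b : G) : G := b * a

theorem isGroupOp_almostTrivialOp : IsGroupOp (almostTrivialOp : G → G → G) :=
  ⟨fun a b c => (mul_assoc c b a).symm, 1, fun a => ⟨mul_one a, one_mul a⟩,
    fun a => ⟨a⁻¹, inv_mul_cancel a, mul_inv_cancel a⟩⟩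

theorem isSkewBrace_almostTrivialOp : IsSkewBrace (almostTrivialOp : G → G → G) := by
  refine ⟨isGroupOp_almostTrivialOp, fun a b c => ?_⟩
  calc b * c * a = b * (c * a) := mul_assoc b c a
    _ = b * a * a⁻¹ * (c * a) := by rw [mul_inv_cancel_right]

theorem isCircSubgroup_almostTrivialOp (H : Subgroup G) :
    IsCircSubgroup almostTrivialOp (H : Set G) :=
  ⟨H.one_mem, fun _ ha _ hb => H.mul_mem hb ha,
    fun a ha => ⟨a⁻¹, H.inv_mem ha, inv_mul_cancel a, mul_inv_cancel a⟩⟩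

theorem isLeftIdeal_almostTrivialOp_iff_normal {I : Subgroup G} :
    IsLeftIdeal almostTrivialOp I ↔ I.Normal := by
  have gamma_eq_conj (a b : G) : a⁻¹ * almostTrivialOp a b = a⁻¹ * b * a :=
    (mul_assoc a⁻¹ b a).symm
  simp only [IsLeftIdeal, gamma_eq_conj]
  constructor
  · intro conj_mem
    refine ⟨fun b hb a => ?_⟩
    simpa only [inv_inv] using conj_mem a⁻¹ b hb
  · intro hI a b hb
    exact hI.conj_mem' b hb a

end AlmostTrivial

theorem every_subgroup_normal_of_good_general (N : Type*) [Group N]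
    (h : ∀ op : N → N → N, IsSkewBrace op →
      ∀ S : Set N, IsCircSubgroup op S →
        ∃ I : Subgroup N, (I : Set N) = S ∧ IsLeftIdeal op I) :
    ∀ H : Subgroup N, H.Normal := by
  intro H
  obtain ⟨I, hIH, hI⟩ :=
    h almostTrivialOp isSkewBrace_almostTrivialOp H (isCircSubgroup_almostTrivialOp H)
  obtain rfl : I = H := SetLike.coe_injective hIH
  exact isLeftIdeal_almostTrivialOp_iff_normal.mp hI

/-- If every subgroup of `(N, ∘)` is a left ideal of `(N, ·, ∘)` for all skew brace
operations `∘` on the finite group `N`, then every subgroup of `N` is normal. -/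
theorem every_subgroup_normal_of_good (N : Type*) [Group N] [Finite N]
    (h : ∀ op : N → N → N, IsSkewBrace op →
      ∀ S : Set N, IsCircSubgroup op S →
        ∃ I : Subgroup N, (I : Set N) = S ∧ IsLeftIdeal op I) :
    ∀ H : Subgroup N, H.Normal :=
  every_subgroup_normal_of_good_general N h
end

section
/- Let Q₈ be the quaternion group of order 8 with presentation ⟨σ, τ ∣ σ⁴ = 1, σ² = τ², τστ⁻¹ = σ⁻¹⟩ and multiplication ·. The operation ∘ defined by σⁱτʲ ∘ σʳτˢ = σ^{i+r} τ^{j+(−1)^{i+j} s} (for all integers i,j,r,s) is a well-defined group operation on Q₈, the pair (Q₈,·,∘) is a skew brace, and the group (Q₈,∘) is isomorphic to the dihedral group of order 8. -/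
/-!
On the generalized quaternion group of order `4n`, with `σ = a 1` and `τ = xa 0`, every element
`x` acts by an automorphism `γ x`: rotations `a i` fix `σ` and elements `xa i` invert it. Setting
`x ∘ y = x * γ x y`, multiplicativity of `γ x` is the brace relation, and
`a i ↦ r (-i)`, `xa i ↦ sr i` carries `∘` to the multiplication of the dihedral group of
order `4n`. In terms of the generators,
`σⁱτʲ ∘ σʳτˢ = σ^((-1)ˢ i + r) τ^(j + (-1)ʲ s)`; for `n = 2` the relation `σ² = τ²` turns
`σ^((-1)ˢ i)` into `σⁱ` times an even power of `τ`, which gives the exponents of the theorem.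
-/

section SkewBraceCriteria

variable {G H : Type*}

theorem isGroupOp_of_equiv [Group H] {op : G → G → G} (e : G ≃ H)
    (he : ∀ x y, e (op x y) = e x * e y) : IsGroupOp op := by
  refine ⟨fun x y z => e.injective ?_, e.symm 1, fun x => ⟨e.injective ?_, e.injective ?_⟩,
    fun x => ⟨e.symm (e x)⁻¹, e.injective ?_, e.injective ?_⟩⟩
  · simp only [he, mul_assoc]
  all_goals simp [he]

theorem isSkewBrace_of_mul_monoidHom [Group G] {op : G → G → G} (hop : IsGroupOp op)
    (γ : G → G →* G) (hγ : ∀ x y, op x y = x * γ x y) : IsSkewBrace op := by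
  refine ⟨hop, fun x y z => ?_⟩
  calc op x (y * z) = x * γ x y * γ x z := by rw [hγ, map_mul, mul_assoc]
    _ = op x y * x⁻¹ * op x z := by rw [hγ x y, hγ x z]; group

end SkewBraceCriteria

section GeneralizedQuaternion

open QuaternionGroup

variable {n : ℕ}

theorem two_mul_natCast_zmod_two_mul (n : ℕ) : 2 * (n : ZMod (2 * n)) = 0 := by
  exact_mod_cast ZMod.natCast_self (2 * n)

theorem units_mul_natCast_zmod_two_mul (u : ℤˣ) (n : ℕ) :
    ((u : ℤ) : ZMod (2 * n)) * n = n := by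
  rcases Int.units_eq_one_or u with rfl | rfl
  · simp
  · push_cast
    linear_combination -two_mul_natCast_zmod_two_mul n

/-- The endomorphism of the generalized quaternion group that acts on the exponents of the
rotations `a r` by the sign `u`, and on those of the elements `xa r` by `r ↦ u * r + c`. -/
def quaternionAffineHom (u : ℤˣ) (c : ZMod (2 * n)) : QuaternionGroup n →* QuaternionGroup n :=
  MonoidHom.mk'
    (fun
      | a r => a ((u : ℤ) * r)
      | xa r => xa ((u : ℤ) * r + c))
    (by
      rintro (r | r) (s | s) <;>
        simp only [a_mul_a, a_mul_xa, xa_mul_a, xa_mul_xa, a.injEq, xa.injEq]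
      · ring
      · ring
      · ring
      · linear_combination units_mul_natCast_zmod_two_mul u n)

/-- The map `γ` of the skew brace on the generalized quaternion group, which determines its
circle operation as `x ∘ y = x * γ x y`. -/
def quaternionGamma : QuaternionGroup n → QuaternionGroup n →* QuaternionGroup n
  | a i => quaternionAffineHom 1 (2 * i)
  | xa i => quaternionAffineHom (-1) (n + 2 * i)

/-- The circle operation of the skew brace on the generalized quaternion group. -/
def quaternionCirc (x y : QuaternionGroup n) : QuaternionGroup n :=
  x * quaternionGamma x y

theorem quaternionCirc_a_a (i r : ZMod (2 * n)) :
    quaternionCirc (a i) (a r) = a (i + r) := by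
  simp [quaternionCirc, quaternionGamma, quaternionAffineHom]

theorem quaternionCirc_a_xa (i r : ZMod (2 * n)) :
    quaternionCirc (a i) (xa r) = xa (i + r) := by
  simp only [quaternionCirc, quaternionGamma, quaternionAffineHom, MonoidHom.mk'_apply, a_mul_xa,
    xa.injEq]
  push_cast
  ring

theorem quaternionCirc_xa_a (i r : ZMod (2 * n)) :
    quaternionCirc (xa i) (a r) = xa (i - r) := by
  simp [quaternionCirc, quaternionGamma, quaternionAffineHom, sub_eq_add_neg]

theorem quaternionCirc_xa_xa (i r : ZMod (2 * n)) :
    quaternionCirc (xa i) (xa r) = a (i - r) := by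
  simp only [quaternionCirc, quaternionGamma, quaternionAffineHom, MonoidHom.mk'_apply, xa_mul_xa,
    a.injEq]
  push_cast
  linear_combination two_mul_natCast_zmod_two_mul n

/-- The identification of the generalized quaternion group under its circle operation with the
dihedral group of the same order. The sign in `a i ↦ r (-i)` is there because
`a i ∘ xa r = xa (i + r)`, whereas `r i * sr j = sr (j - i)`. -/
def quaternionEquivDihedral : QuaternionGroup n ≃ DihedralGroup (2 * n) where
  toFun
    | a i => .r (-i)
    | xa i => .sr i
  invFun
    | .r i => a (-i)
    | .sr i => xa i
  left_inv := by rintro (i | i) <;> simp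
  right_inv := by rintro (i | i) <;> simp

theorem quaternionEquivDihedral_a (i : ZMod (2 * n)) :
    quaternionEquivDihedral (a i) = .r (-i) :=
  rfl

theorem quaternionEquivDihedral_xa (i : ZMod (2 * n)) :
    quaternionEquivDihedral (xa i) = .sr i :=
  rfl

theorem quaternionEquivDihedral_quaternionCirc (x y : QuaternionGroup n) :
    quaternionEquivDihedral (quaternionCirc x y) =
      quaternionEquivDihedral x * quaternionEquivDihedral y := by
  rcases x with i | i <;> rcases y with r | r
  · rw [quaternionCirc_a_a]
    simp only [quaternionEquivDihedral_a, DihedralGroup.r_mul_r, neg_add]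
  · rw [quaternionCirc_a_xa]
    simp only [quaternionEquivDihedral_a, quaternionEquivDihedral_xa, DihedralGroup.r_mul_sr,
      sub_neg_eq_add, add_comm]
  · rw [quaternionCirc_xa_a]
    simp only [quaternionEquivDihedral_a, quaternionEquivDihedral_xa, DihedralGroup.sr_mul_r,
      sub_eq_add_neg]
  · rw [quaternionCirc_xa_xa]
    simp only [quaternionEquivDihedral_a, quaternionEquivDihedral_xa, DihedralGroup.sr_mul_sr,
      neg_sub]

theorem isSkewBrace_quaternionCirc : IsSkewBrace (quaternionCirc (n := n)) :=
  isSkewBrace_of_mul_monoidHom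
    (isGroupOp_of_equiv quaternionEquivDihedral quaternionEquivDihedral_quaternionCirc)
    quaternionGamma fun _ _ => rfl

theorem quaternion_a_one_zpow (k : ℤ) : (a 1 : QuaternionGroup n) ^ k = a k := by
  let rotation : Multiplicative (ZMod (2 * n)) →* QuaternionGroup n :=
    MonoidHom.mk' (fun i => a i.toAdd) fun _ _ => rfl
  calc (a 1 : QuaternionGroup n) ^ k = rotation (.ofAdd 1 ^ k) := (map_zpow rotation _ k).symm
    _ = a k := by rw [← ofAdd_zsmul, zsmul_one]; rfl

theorem quaternion_xa_zpow_two_mul (i : ZMod (2 * n)) (k : ℤ) :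
    (xa i : QuaternionGroup n) ^ (2 * k) = a (n * k) := by
  rw [zpow_mul, zpow_ofNat, xa_sq, ← a_one_pow, ← zpow_natCast, ← zpow_mul, quaternion_a_one_zpow,
    Int.cast_mul, Int.cast_natCast]

theorem quaternion_zpow_mul_zpow_two_mul (i k : ℤ) :
    (a 1 : QuaternionGroup n) ^ i * xa 0 ^ (2 * k) = a (i + n * k) := by
  rw [quaternion_a_one_zpow, quaternion_xa_zpow_two_mul, a_mul_a]

theorem quaternion_zpow_mul_zpow_two_mul_add_one (i k : ℤ) :
    (a 1 : QuaternionGroup n) ^ i * xa 0 ^ (2 * k + 1) = xa (-(i + n * k)) := by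
  rw [zpow_add_one, ← mul_assoc, quaternion_zpow_mul_zpow_two_mul, a_mul_xa, zero_sub]

theorem quaternionCirc_zpow_mul_zpow (i j r s : ℤ) :
    quaternionCirc ((a 1 : QuaternionGroup n) ^ i * xa 0 ^ j) (a 1 ^ r * xa 0 ^ s) =
      a 1 ^ ((s.negOnePow : ℤ) * i + r) * xa 0 ^ (j + (j.negOnePow : ℤ) * s) := by
  have two_n := two_mul_natCast_zmod_two_mul n
  rcases Int.even_or_odd' j with ⟨j, rfl | rfl⟩ <;>
    rcases Int.even_or_odd' s with ⟨s, rfl | rfl⟩ <;>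
    simp only [Int.negOnePow_two_mul, Int.negOnePow_two_mul_add_one, Units.val_one, Units.val_neg]
  · have exponent : 2 * j + 1 * (2 * s) = 2 * (j + s) := by ring
    simp only [exponent, quaternion_zpow_mul_zpow_two_mul, quaternionCirc_a_a, a.injEq]
    push_cast
    ring
  · have exponent : 2 * j + 1 * (2 * s + 1) = 2 * (j + s) + 1 := by ring
    simp only [exponent, quaternion_zpow_mul_zpow_two_mul,
      quaternion_zpow_mul_zpow_two_mul_add_one, quaternionCirc_a_xa, xa.injEq]
    push_cast
    linear_combination (j : ZMod (2 * n)) * two_n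
  · have exponent : 2 * j + 1 + -1 * (2 * s) = 2 * (j - s) + 1 := by ring
    simp only [exponent, quaternion_zpow_mul_zpow_two_mul,
      quaternion_zpow_mul_zpow_two_mul_add_one, quaternionCirc_xa_a, xa.injEq]
    push_cast
    linear_combination -(s : ZMod (2 * n)) * two_n
  · have exponent : 2 * j + 1 + -1 * (2 * s + 1) = 2 * (j - s) := by ring
    simp only [exponent, quaternion_zpow_mul_zpow_two_mul,
      quaternion_zpow_mul_zpow_two_mul_add_one, quaternionCirc_xa_xa, a.injEq]
    push_cast
    linear_combination (s - j : ZMod (2 * n)) * two_n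

end GeneralizedQuaternion

section OrderEight

theorem negOnePow_exponent_modEq_four (i j s : ℤ) :
    ((s.negOnePow : ℤ) - 1) * i + (j + (j.negOnePow : ℤ) * s) ≡
      j + ((i + j).negOnePow : ℤ) * s [ZMOD 4] := by
  rw [Int.negOnePow_add, Int.modEq_iff_dvd]
  rcases Int.even_or_odd' i with ⟨i, rfl | rfl⟩ <;>
    rcases Int.even_or_odd' s with ⟨s, rfl | rfl⟩ <;>
    rcases Int.units_eq_one_or j.negOnePow with hj | hj <;>
    simp only [hj, Int.negOnePow_two_mul, Int.negOnePow_two_mul_add_one, Units.val_one,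
      Units.val_neg, Units.val_mul] <;>
    omega

theorem zpow_mul_zpow_eq_of_sq_eq_sq {G : Type*} [Group G] {σ τ : G} (hστ : σ ^ 2 = τ ^ 2)
    (hτ : τ ^ 4 = 1) (i j r s : ℤ) :
    σ ^ ((s.negOnePow : ℤ) * i + r) * τ ^ (j + (j.negOnePow : ℤ) * s) =
      σ ^ (i + r) * τ ^ (j + ((i + j).negOnePow : ℤ) * s) := by
  have even_zpow (k : ℤ) : σ ^ (2 * k) = τ ^ (2 * k) := by
    rw [zpow_mul, zpow_mul, zpow_ofNat, zpow_ofNat, hστ]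
  have sign_sub_one_zpow : σ ^ (((s.negOnePow : ℤ) - 1) * i) =
      τ ^ (((s.negOnePow : ℤ) - 1) * i) := by
    rcases Int.units_eq_one_or s.negOnePow with hs | hs
    · simp [hs]
    · simpa [hs] using even_zpow (-i)
  have order_dvd : (orderOf τ : ℤ) ∣ 4 := by
    exact_mod_cast orderOf_dvd_of_pow_eq_one hτ
  calc σ ^ ((s.negOnePow : ℤ) * i + r) * τ ^ (j + (j.negOnePow : ℤ) * s)
      = σ ^ (i + r) * σ ^ (((s.negOnePow : ℤ) - 1) * i) * τ ^ (j + (j.negOnePow : ℤ) * s) := by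
        rw [← zpow_add]; ring_nf
    _ = σ ^ (i + r) * τ ^ (((s.negOnePow : ℤ) - 1) * i + (j + (j.negOnePow : ℤ) * s)) := by
        rw [sign_sub_one_zpow, mul_assoc, ← zpow_add]
    _ = σ ^ (i + r) * τ ^ (j + ((i + j).negOnePow : ℤ) * s) := by
        rw [zpow_eq_zpow_iff_modEq.mpr ((negOnePow_exponent_modEq_four i j s).of_dvd order_dvd)]

end OrderEight

theorem quaternion_skew_brace_dihedral_general (n : ℕ) :
    ∃ op : QuaternionGroup n → QuaternionGroup n → QuaternionGroup n,
      (∀ i j r s : ℤ,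
        op ((QuaternionGroup.a 1) ^ i * (QuaternionGroup.xa 0) ^ j)
           ((QuaternionGroup.a 1) ^ r * (QuaternionGroup.xa 0) ^ s) =
          (QuaternionGroup.a 1) ^ ((s.negOnePow : ℤ) * i + r) *
            (QuaternionGroup.xa 0) ^ (j + (j.negOnePow : ℤ) * s)) ∧
      IsSkewBrace op ∧
      ∃ e : QuaternionGroup n ≃ DihedralGroup (2 * n), ∀ x y, e (op x y) = e x * e y :=
  ⟨quaternionCirc, quaternionCirc_zpow_mul_zpow, isSkewBrace_quaternionCirc,
    quaternionEquivDihedral, quaternionEquivDihedral_quaternionCirc⟩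

/-- **Example 3.1.** On `Q₈ = ⟨σ, τ⟩` (with `σ = a 1`, `τ = xa 0` in Mathlib's
`QuaternionGroup 2`), the operation `σⁱτʲ ∘ σʳτˢ = σ^(i+r) τ^(j + (-1)^(i+j) s)` is a
well-defined group operation, `(Q₈, ·, ∘)` is a skew brace, and `(Q₈, ∘)` is isomorphic
to the dihedral group of order `8`. -/
theorem quaternion_skew_brace_dihedral :
    ∃ op : QuaternionGroup 2 → QuaternionGroup 2 → QuaternionGroup 2,
      (∀ i j r s : ℤ,
        op ((QuaternionGroup.a 1) ^ i * (QuaternionGroup.xa 0) ^ j)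
           ((QuaternionGroup.a 1) ^ r * (QuaternionGroup.xa 0) ^ s) =
          (QuaternionGroup.a 1) ^ (i + r) *
            (QuaternionGroup.xa 0) ^ (j + ((i + j).negOnePow : ℤ) * s)) ∧
      IsSkewBrace op ∧
      ∃ e : QuaternionGroup 2 ≃ DihedralGroup 4, ∀ x y, e (op x y) = e x * e y := by
  obtain ⟨op, hop, skewBrace, dihedral⟩ := quaternion_skew_brace_dihedral_general 2
  exact ⟨op, fun i j r s => (hop i j r s).trans
    (zpow_mul_zpow_eq_of_sq_eq_sq (by simp) (QuaternionGroup.xa_pow_four 0) i j r s),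
    skewBrace, dihedral⟩
end

section
/- The elementary abelian group (ℤ/2ℤ)³ of order 8 is bad: there exists a group operation ∘ on (ℤ/2ℤ)³ such that ((ℤ/2ℤ)³, +, ∘) is a skew brace and some subgroup of ((ℤ/2ℤ)³, ∘) is not a left ideal of ((ℤ/2ℤ)³, +, ∘). In fact, for ∘ given by (i,j,k) ∘ (r,s,t) = (i+r+jt+ks, j+s, k+t), the set {0} × ℤ/2ℤ × ℤ/2ℤ is a subgroup under + but not under ∘. -/
/-!
A biadditive map `B : V × V → A` between abelian groups is a 2-cocycle, so
`(a, v) ∘ (b, w) = (a + b + B v w, v + w)` is a group operation on `A × V`; since `B` is additive in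
its second argument, it even forms a brace with the componentwise addition, with
`γ_(a, v) (b, w) = (b + B v w, w)`. For a subgroup `W` of `V`, the set `{0} × W` is therefore a
`∘`-subgroup exactly when `B` vanishes on `W × W`, but a left ideal exactly when `B` vanishes on
all of `V × W`. For the hyperbolic plane `V = R × R` the isotropic line `W = R × {0}` separates the
two conditions, and `W = V` violates the first one.
-/

lemma mem_bot_prod_iff {A V : Type*} [AddGroup A] [AddGroup V] {W : AddSubgroup V}
    {x : A × V} :
    x ∈ (⊥ : AddSubgroup A).prod W ↔ x.1 = 0 ∧ x.2 ∈ W := by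
  rw [AddSubgroup.mem_prod, AddSubgroup.mem_bot]

section TwistedAdd

variable {A V : Type*} [AddCommGroup A] [AddCommGroup V] (B : V →+ V →+ A)

/-- The operation `(a, v) ∘ (b, w) = (a + b + B v w, v + w)` on `A × V`: the group law of the
central extension of `V` by `A` whose cocycle is the biadditive map `B`. -/
def twistedAdd (x y : A × V) : A × V :=
  (x.1 + y.1 + B x.2 y.2, x.2 + y.2)

lemma isGroupOp_twistedAdd : IsGroupOp (twistedAdd B) := by
  refine ⟨fun x y z => ?_, 0, fun x => ?_, fun x => ⟨(-x.1 + B x.2 x.2, -x.2), ?_⟩⟩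
  · ext
    · simp only [twistedAdd, map_add, AddMonoidHom.add_apply]
      abel
    · exact add_assoc x.2 y.2 z.2
  · simp [twistedAdd]
  · simp [twistedAdd]

lemma isSkewBraceAdd_twistedAdd : IsSkewBraceAdd (twistedAdd B) := by
  refine ⟨isGroupOp_twistedAdd B, fun x y z => ?_⟩
  ext
  · simp only [twistedAdd, Prod.fst_add, Prod.snd_add, Prod.fst_sub, map_add]
    abel
  · simp only [twistedAdd, Prod.snd_add, Prod.snd_sub]
    abel

lemma neg_add_twistedAdd (x y : A × V) :
    -x + twistedAdd B x y = (y.1 + B x.2 y.2, y.2) := by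
  simp [twistedAdd, Prod.ext_iff, add_assoc]

lemma isCircSubgroupAdd_bot_prod_iff (W : AddSubgroup V) :
    IsCircSubgroupAdd (twistedAdd B) ((⊥ : AddSubgroup A).prod W : Set (A × V)) ↔
      ∀ v ∈ W, ∀ w ∈ W, B v w = 0 := by
  simp only [IsCircSubgroupAdd, SetLike.mem_coe]
  constructor
  · rintro ⟨-, closed, -⟩ v hv w hw
    have product_mem := closed (0, v) (mem_bot_prod_iff.2 ⟨rfl, hv⟩)
      (0, w) (mem_bot_prod_iff.2 ⟨rfl, hw⟩)
    simpa [twistedAdd] using (mem_bot_prod_iff.1 product_mem).1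
  · intro isotropic
    refine ⟨zero_mem _, ?_, ?_⟩
    · rintro ⟨a, v⟩ hx ⟨b, w⟩ hy
      obtain ⟨rfl, hv⟩ := mem_bot_prod_iff.1 hx
      obtain ⟨rfl, hw⟩ := mem_bot_prod_iff.1 hy
      exact mem_bot_prod_iff.2 ⟨by simp [twistedAdd, isotropic v hv w hw], add_mem hv hw⟩
    · rintro ⟨a, v⟩ hx
      obtain ⟨rfl, hv⟩ := mem_bot_prod_iff.1 hx
      exact ⟨(0, -v), mem_bot_prod_iff.2 ⟨rfl, neg_mem hv⟩,
        by simp [twistedAdd, isotropic v hv v hv]⟩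

lemma isLeftIdealAdd_bot_prod_iff (W : AddSubgroup V) :
    IsLeftIdealAdd (twistedAdd B) ((⊥ : AddSubgroup A).prod W) ↔ ∀ v, ∀ w ∈ W, B v w = 0 := by
  simp only [IsLeftIdealAdd, neg_add_twistedAdd, mem_bot_prod_iff]
  constructor
  · intro stable v w hw
    simpa using (stable (0, v) (0, w) ⟨rfl, hw⟩).1
  · rintro radical ⟨a, v⟩ ⟨b, w⟩ ⟨rfl, hw⟩
    exact ⟨by simp [radical v w hw], hw⟩

end TwistedAdd

section HyperbolicPairing

variable (R : Type*) [NonAssocRing R]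

/-- The biadditive form `⟨(j, k), (s, t)⟩ = j * t + k * s` of the hyperbolic plane `R × R`. -/
def hyperbolicPairing : R × R →+ R × R →+ R :=
  (AddMonoidHom.mul.compl₂ (AddMonoidHom.snd R R)).comp (AddMonoidHom.fst R R) +
    (AddMonoidHom.mul.compl₂ (AddMonoidHom.fst R R)).comp (AddMonoidHom.snd R R)

/-- The line `R × {0}` in the hyperbolic plane, on which `hyperbolicPairing` vanishes. -/
def isotropicLine : AddSubgroup (R × R) :=
  (⊤ : AddSubgroup R).prod ⊥

variable {R}

lemma hyperbolicPairing_apply (v w : R × R) :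
    hyperbolicPairing R v w = v.1 * w.2 + v.2 * w.1 :=
  rfl

lemma twistedAdd_hyperbolicPairing (x y : R × R × R) :
    twistedAdd (hyperbolicPairing R) x y =
      (x.1 + y.1 + x.2.1 * y.2.2 + x.2.2 * y.2.1, x.2.1 + y.2.1, x.2.2 + y.2.2) := by
  simp [twistedAdd, hyperbolicPairing_apply, Prod.ext_iff, add_assoc]

lemma isCircSubgroupAdd_bot_prod_isotropicLine :
    IsCircSubgroupAdd (twistedAdd (hyperbolicPairing R))
      ((⊥ : AddSubgroup R).prod (isotropicLine R) : Set (R × R × R)) := by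
  rw [isCircSubgroupAdd_bot_prod_iff]
  intro v hv w hw
  have hv_snd : v.2 = 0 := (AddSubgroup.mem_prod.1 hv).2
  have hw_snd : w.2 = 0 := (AddSubgroup.mem_prod.1 hw).2
  simp [hyperbolicPairing_apply, hv_snd, hw_snd]

variable [Nontrivial R]

lemma not_isLeftIdealAdd_bot_prod_isotropicLine :
    ¬ IsLeftIdealAdd (twistedAdd (hyperbolicPairing R))
      ((⊥ : AddSubgroup R).prod (isotropicLine R)) := by
  rw [isLeftIdealAdd_bot_prod_iff]
  intro radical
  have pairing_eq_zero := radical (0, 1) (1, 0) ⟨trivial, rfl⟩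
  simp [hyperbolicPairing_apply] at pairing_eq_zero

lemma not_isCircSubgroupAdd_bot_prod_top :
    ¬ IsCircSubgroupAdd (twistedAdd (hyperbolicPairing R))
      ((⊥ : AddSubgroup R).prod (⊤ : AddSubgroup (R × R)) : Set (R × R × R)) := by
  rw [isCircSubgroupAdd_bot_prod_iff]
  intro isotropic
  have pairing_eq_zero := isotropic (1, 0) trivial (0, 1) trivial
  simp [hyperbolicPairing_apply] at pairing_eq_zero

end HyperbolicPairing

theorem elementary_abelian_rank_three_bad_general (R : Type*) [NonAssocRing R] [Nontrivial R] :
    (∃ op : R × R × R → R × R × R → R × R × R,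
      IsSkewBraceAdd op ∧
      ∃ S : Set (R × R × R), IsCircSubgroupAdd op S ∧
        ¬ ∃ I : AddSubgroup (R × R × R), (I : Set (R × R × R)) = S ∧ IsLeftIdealAdd op I) ∧
    ∀ op : R × R × R → R × R × R → R × R × R,
      (∀ x y, op x y =
        (x.1 + y.1 + x.2.1 * y.2.2 + x.2.2 * y.2.1, x.2.1 + y.2.1, x.2.2 + y.2.2)) →
      (∃ I : AddSubgroup (R × R × R), (I : Set (R × R × R)) = {x | x.1 = 0}) ∧
      ¬ IsCircSubgroupAdd op {x | x.1 = 0} := by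
  refine ⟨⟨twistedAdd (hyperbolicPairing R), isSkewBraceAdd_twistedAdd _, _,
    isCircSubgroupAdd_bot_prod_isotropicLine, ?_⟩, fun op hop => ?_⟩
  · rintro ⟨I, hI, hI_leftIdeal⟩
    obtain rfl := SetLike.coe_injective hI
    exact not_isLeftIdealAdd_bot_prod_isotropicLine hI_leftIdeal
  · obtain rfl : op = twistedAdd (hyperbolicPairing R) :=
      funext₂ fun x y => (hop x y).trans (twistedAdd_hyperbolicPairing x y).symm
    have coe_eq : ((⊥ : AddSubgroup R).prod (⊤ : AddSubgroup (R × R)) : Set (R × R × R)) =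
        {x | x.1 = 0} := by
      ext x
      simp [mem_bot_prod_iff]
    exact ⟨⟨_, coe_eq⟩, coe_eq ▸ not_isCircSubgroupAdd_bot_prod_top⟩

/-- **Example 3.2.** `(ℤ/2ℤ)³` is bad; in fact, for the skew brace operation
`(i,j,k) ∘ (r,s,t) = (i+r+jt+ks, j+s, k+t)`, the set `{0} × ℤ/2ℤ × ℤ/2ℤ` is a subgroup
under `+` but not under `∘`. -/
theorem elementary_abelian_rank_three_bad :
    (∃ op : ZMod 2 × ZMod 2 × ZMod 2 → ZMod 2 × ZMod 2 × ZMod 2 → ZMod 2 × ZMod 2 × ZMod 2,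
      IsSkewBraceAdd op ∧
      ∃ S : Set (ZMod 2 × ZMod 2 × ZMod 2), IsCircSubgroupAdd op S ∧
        ¬ ∃ I : AddSubgroup (ZMod 2 × ZMod 2 × ZMod 2),
          (I : Set (ZMod 2 × ZMod 2 × ZMod 2)) = S ∧ IsLeftIdealAdd op I) ∧
    ∀ op : ZMod 2 × ZMod 2 × ZMod 2 → ZMod 2 × ZMod 2 × ZMod 2 → ZMod 2 × ZMod 2 × ZMod 2,
      (∀ x y, op x y =
        (x.1 + y.1 + x.2.1 * y.2.2 + x.2.2 * y.2.1, x.2.1 + y.2.1, x.2.2 + y.2.2)) →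
      (∃ I : AddSubgroup (ZMod 2 × ZMod 2 × ZMod 2),
        (I : Set (ZMod 2 × ZMod 2 × ZMod 2)) = {x | x.1 = 0}) ∧
      ¬ IsCircSubgroupAdd op {x | x.1 = 0} :=
  elementary_abelian_rank_three_bad_general (ZMod 2)
end

section
/- Let k ≥ 1 and let n = 2k. On the cyclic group ℤ/nℤ with addition +, define i ∘ j = i + (−1)^i j. Then ∘ is a well-defined group operation on ℤ/nℤ, the pair (ℤ/nℤ, +, ∘) is a skew brace (in fact a brace), and the group (ℤ/nℤ, ∘) is isomorphic to the dihedral group of order n = 2k (with the conventions that the dihedral group of order 2 is C₂ and the dihedral group of order 4 is C₂ × C₂). -/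
/-!
A map `γ : A → Aut (A, +)` with `γ (a + γ a b) c = γ a (γ b c)` makes `a ∘ b = a + γ a b` a skew
brace on `A`. If `A` is abelian, any character `χ : A → {±1}` gives such a map, `γ a b = χ a • b`,
because `χ (± b) = χ b`. Under the resulting operation `a ∘ b = a + χ a • b`, the kernel of `χ`
keeps its addition, every `t` with `χ t = -1` satisfies `t ∘ t = 0`, and conjugation by `t` inverts
the kernel. So if `χ` is nontrivial with cyclic kernel, then `(A, ∘)` is dihedral. On `ℤ/2kℤ` take
for `χ` the parity character, whose kernel `2ℤ/2kℤ` is a copy of `ℤ/kℤ`, and `t = 1`.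
-/

theorem isSkewBraceAdd_of_gamma {A : Type*} [AddGroup A] (γ : A → A ≃+ A)
    (hγ : ∀ a b c, γ (a + γ a b) c = γ a (γ b c)) : IsSkewBraceAdd fun a b ↦ a + γ a b := by
  have gamma_zero (b : A) : γ 0 b = b := (γ 0).injective (by simpa using (hγ 0 0 b).symm)
  have right_inv (a : A) : a + γ a ((γ a).symm (-a)) = 0 := by simp
  have gamma_right_inv (a b : A) : γ ((γ a).symm (-a)) b = (γ a).symm b := by
    rw [AddEquiv.eq_symm_apply, ← hγ, right_inv, gamma_zero]
  have left_inv (a : A) : (γ a).symm (-a) + γ ((γ a).symm (-a)) a = 0 := by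
    rw [gamma_right_inv, ← map_add, neg_add_cancel, map_zero]
  refine ⟨⟨fun a b c ↦ ?_, 0, fun a ↦ ?_, fun a ↦ ⟨(γ a).symm (-a), right_inv a, left_inv a⟩⟩,
    fun a b c ↦ ?_⟩
  · simp only [hγ, map_add, add_assoc]
  · simp [gamma_zero]
  · simp [sub_eq_add_neg, add_assoc]

section SignCharacter

variable {A : Type*} [AddCommGroup A]

/-- The operation `a ∘ b = a + χ a • b` attached to a character `χ` of `A` with values in
`ℤˣ = {±1}`; it is the circle operation of a brace with additive group `A`. -/
def signCirc (χ : AddChar A ℤˣ) (a b : A) : A :=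
  a + χ a • b

theorem addChar_units_smul (χ : AddChar A ℤˣ) (ε : ℤˣ) (a : A) : χ (ε • a) = χ a := by
  obtain rfl | rfl := Int.units_eq_one_or ε
  · rw [one_smul]
  · rw [Units.neg_smul, one_smul, AddChar.map_neg_eq_inv, Int.units_inv_eq_self]

theorem addChar_sub_eq_neg_one {χ : AddChar A ℤˣ} {a b : A} (ha : χ a = -1) (hb : χ b = 1) :
    χ (a - b) = -1 := by
  rw [AddChar.map_sub_eq_div, ha, hb, div_one]

theorem isSkewBraceAdd_signCirc (χ : AddChar A ℤˣ) : IsSkewBraceAdd (signCirc χ) :=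
  isSkewBraceAdd_of_gamma (fun a ↦ DistribMulAction.toAddEquiv A (χ a)) fun a b c ↦ by
    simp only [DistribMulAction.toAddEquiv_apply, AddChar.map_add_eq_mul, addChar_units_smul,
      mul_smul]

theorem signCirc_of_eq_one {χ : AddChar A ℤˣ} {a : A} (ha : χ a = 1) (b : A) :
    signCirc χ a b = a + b := by
  rw [signCirc, ha, one_smul]

theorem signCirc_of_eq_neg_one {χ : AddChar A ℤˣ} {a : A} (ha : χ a = -1) (b : A) :
    signCirc χ a b = a - b := by
  rw [signCirc, ha, Units.neg_smul, one_smul, sub_eq_add_neg]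

variable {k : ℕ} {χ : AddChar A ℤˣ} {φ : ZMod k →+ A} {t : A}

/-- The map from the dihedral group that sends the rotation `r a` to `φ a` and the reflection `s`
to `t`. For `χ t = -1` the value at `sr a` is `signCirc χ t (φ a)`. -/
def dihedralMap (φ : ZMod k →+ A) (t : A) : DihedralGroup k → A
  | .r a => φ a
  | .sr a => t - φ a

theorem dihedralMap_mul (hφ : ∀ a, χ (φ a) = 1) (ht : χ t = -1) (g h : DihedralGroup k) :
    dihedralMap φ t (g * h) = signCirc χ (dihedralMap φ t g) (dihedralMap φ t h) := by
  rcases g with a | a <;> rcases h with b | b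
  · rw [DihedralGroup.r_mul_r]
    simp only [dihedralMap, signCirc_of_eq_one (hφ a), map_add]
  · rw [DihedralGroup.r_mul_sr]
    simp only [dihedralMap, signCirc_of_eq_one (hφ a), map_sub]
    abel
  · rw [DihedralGroup.sr_mul_r]
    simp only [dihedralMap, signCirc_of_eq_neg_one (addChar_sub_eq_neg_one ht (hφ a)), map_add]
    abel
  · rw [DihedralGroup.sr_mul_sr]
    simp only [dihedralMap, signCirc_of_eq_neg_one (addChar_sub_eq_neg_one ht (hφ a)), map_sub]
    abel

theorem dihedralMap_injective (hφ : ∀ a, χ (φ a) = 1) (ht : χ t = -1)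
    (φ_injective : Function.Injective φ) : Function.Injective (dihedralMap φ t) := by
  have rotation_ne_reflection (a b : ZMod k) : φ a ≠ t - φ b := fun h ↦ by
    have sign_eq : χ (φ a) = χ (t - φ b) := congrArg χ h
    rw [hφ, addChar_sub_eq_neg_one ht (hφ b)] at sign_eq
    exact absurd sign_eq (by decide)
  rintro (a | a) (b | b) h
  · exact congrArg _ (φ_injective h)
  · exact absurd h (rotation_ne_reflection a b)
  · exact absurd h.symm (rotation_ne_reflection b a)
  · exact congrArg _ (φ_injective (sub_right_injective h))

theorem dihedralMap_surjective (hφ : ∀ x, χ x = 1 → x ∈ Set.range φ) (ht : χ t = -1) :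
    Function.Surjective (dihedralMap φ t) := by
  intro x
  obtain hx | hx := Int.units_eq_one_or (χ x)
  · obtain ⟨a, rfl⟩ := hφ x hx
    exact ⟨.r a, rfl⟩
  · obtain ⟨a, ha⟩ := hφ (t - x) (by rw [AddChar.map_sub_eq_div, ht, hx, div_self'])
    exact ⟨.sr a, by simp [dihedralMap, ha]⟩

theorem exists_equiv_dihedralGroup_map_signCirc (φ_injective : Function.Injective φ)
    (hφ : ∀ x, χ x = 1 ↔ x ∈ Set.range φ) (ht : χ t = -1) :
    ∃ e : A ≃ DihedralGroup k, ∀ x y, e (signCirc χ x y) = e x * e y := by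
  have sign_map (a : ZMod k) : χ (φ a) = 1 := (hφ _).2 ⟨a, rfl⟩
  let f : DihedralGroup k ≃ A := .ofBijective (dihedralMap φ t)
    ⟨dihedralMap_injective sign_map ht φ_injective, dihedralMap_surjective (fun x ↦ (hφ x).1) ht⟩
  have f_mul (g h : DihedralGroup k) : f (g * h) = signCirc χ (f g) (f h) :=
    dihedralMap_mul sign_map ht g h
  exact ⟨f.symm, fun x y ↦ by
    rw [Equiv.symm_apply_eq, f_mul, f.apply_symm_apply, f.apply_symm_apply]⟩

end SignCharacter

section ScaleHom

variable (d m : ℕ)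

/-- Multiplication by `d`, as the map `ℤ/mℤ → ℤ/dmℤ` that it induces. -/
def zmodScaleHom : ZMod m →+ ZMod (d * m) :=
  ZMod.lift m ⟨(Int.castAddHom (ZMod (d * m))).comp (AddMonoidHom.mulLeft (d : ℤ)), by
    simpa only [Nat.cast_mul, AddMonoidHom.comp_apply, AddMonoidHom.coe_mulLeft,
      Int.coe_castAddHom, Int.cast_mul, Int.cast_natCast] using ZMod.natCast_self (d * m)⟩

theorem zmodScaleHom_intCast (a : ℤ) : zmodScaleHom d m a = ((d * a : ℤ) : ZMod (d * m)) :=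
  ZMod.lift_coe ..

theorem zmodScaleHom_injective [NeZero d] : Function.Injective (zmodScaleHom d m) := by
  refine (injective_iff_map_eq_zero _).2 (ZMod.intCast_surjective.forall.2 fun a ha ↦ ?_)
  rw [zmodScaleHom_intCast, ZMod.intCast_zmod_eq_zero_iff_dvd, Nat.cast_mul] at ha
  rw [ZMod.intCast_zmod_eq_zero_iff_dvd]
  exact Int.dvd_of_mul_dvd_mul_left (NeZero.ne _) ha

theorem intCast_mem_range_zmodScaleHom_iff (i : ℤ) :
    (i : ZMod (d * m)) ∈ Set.range (zmodScaleHom d m) ↔ (d : ℤ) ∣ i := by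
  refine ⟨?_, fun ⟨a, ha⟩ ↦ ⟨a, by rw [zmodScaleHom_intCast, ha]⟩⟩
  rintro ⟨a, ha⟩
  obtain ⟨a, rfl⟩ := ZMod.intCast_surjective a
  rw [zmodScaleHom_intCast, ZMod.intCast_eq_intCast_iff_dvd_sub, Nat.cast_mul] at ha
  exact (dvd_sub_left (dvd_mul_right _ _)).1 (dvd_of_mul_right_dvd ha)

end ScaleHom

section Parity

variable (k : ℕ)

/-- The character `i ↦ (-1)^i` of `ℤ/2kℤ`, defined through the reduction `ℤ/2kℤ → ℤ/2ℤ` because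
`ℤˣ` has powers with exponents in `ZMod 2`. -/
def paritySign : AddChar (ZMod (2 * k)) ℤˣ where
  toFun x := (-1) ^ ZMod.castHom (dvd_mul_right 2 k) (ZMod 2) x
  map_zero_eq_one' := by rw [map_zero, uzpow_zero]
  map_add_eq_mul' x y := by rw [map_add, uzpow_add]

theorem paritySign_intCast (i : ℤ) : paritySign k i = i.negOnePow := by
  change (-1 : ℤˣ) ^ ZMod.castHom (dvd_mul_right 2 k) (ZMod 2) i = _
  rw [map_intCast, uzpow_intCast, Int.negOnePow_def]

theorem paritySign_one : paritySign k 1 = -1 := by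
  simpa using paritySign_intCast k 1

theorem paritySign_eq_one_iff (x : ZMod (2 * k)) :
    paritySign k x = 1 ↔ x ∈ Set.range (zmodScaleHom 2 k) := by
  obtain ⟨i, rfl⟩ := ZMod.intCast_surjective x
  rw [paritySign_intCast, Int.negOnePow_eq_one_iff, intCast_mem_range_zmodScaleHom_iff,
    even_iff_two_dvd, Nat.cast_ofNat]

end Parity

/-- Since `ZMod 0 = ℤ`, the case `k = 0` is the brace on `ℤ` whose circle group is the infinite
dihedral group. There the values at natural numbers do not determine the operation, so `i` and `j`
range over the integers. -/
theorem cyclic_even_brace_dihedral_general (k : ℕ) :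
    ∃ op : ZMod (2 * k) → ZMod (2 * k) → ZMod (2 * k),
      (∀ i j : ℤ, op i j = i + i.negOnePow • (j : ZMod (2 * k))) ∧
      IsSkewBraceAdd op ∧
      ∃ e : ZMod (2 * k) ≃ DihedralGroup k, ∀ x y, e (op x y) = e x * e y :=
  ⟨signCirc (paritySign k),
    fun i j ↦ by rw [signCirc, paritySign_intCast],
    isSkewBraceAdd_signCirc _,
    exists_equiv_dihedralGroup_map_signCirc (zmodScaleHom_injective 2 k) (paritySign_eq_one_iff k)
      (paritySign_one k)⟩

/-- **Example 3.3.** Let `n = 2k` be even, `k ≥ 1`. On `ℤ/nℤ` the operation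
`i ∘ j = i + (-1)^i j` is a well-defined group operation making `(ℤ/nℤ, +, ∘)` a skew
brace (in fact a brace), and `(ℤ/nℤ, ∘)` is isomorphic to the dihedral group of order
`n` (with `D₂ = C₂`, `D₄ = C₂ × C₂`; Mathlib's `DihedralGroup k` has order `2k`). -/
theorem cyclic_even_brace_dihedral (k : ℕ) (hk : 1 ≤ k) :
    ∃ op : ZMod (2 * k) → ZMod (2 * k) → ZMod (2 * k),
      (∀ i j : ℕ, op (i : ZMod (2 * k)) (j : ZMod (2 * k)) =
        (i : ZMod (2 * k)) + (-1 : ZMod (2 * k)) ^ i * (j : ZMod (2 * k))) ∧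
      IsSkewBraceAdd op ∧
      ∃ e : ZMod (2 * k) ≃ DihedralGroup k, ∀ x y, e (op x y) = e x * e y := by
  obtain ⟨op, op_intCast, hop⟩ := cyclic_even_brace_dihedral_general k
  exact ⟨op, fun i j ↦ by simpa [Units.smul_def] using op_intCast i j, hop⟩
end

section
/- For every even integer n ≥ 4, the cyclic group ℤ/nℤ is bad: there exists a group operation ∘ on ℤ/nℤ such that (ℤ/nℤ, +, ∘) is a skew brace and some subgroup of (ℤ/nℤ, ∘) is not a left ideal of (ℤ/nℤ, +, ∘). -/
/-!
A map `γ : G → Aut G` with `γ (a + γ a b) = γ a ∘ γ b` turns `a + γ a b` into a skew brace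
operation on `G`. If `γ g` negates `g` then this operation sends `(g, g)` to `0`, so `{0, g}` is a
subgroup for it, but not even an additive subgroup once `g + g ≠ 0`. On an abelian group with a
subgroup `H` of index two, let `γ a` be the identity for `a ∈ H` and negation for `a ∉ H`.
-/

/-- An additive group is bad if some skew brace operation on it admits a `∘`-subgroup that is not a
left ideal. The group is not required to be finite. -/
def IsBadAddGroup (G : Type*) [AddGroup G] : Prop :=
  ∃ op : G → G → G, IsSkewBraceAdd op ∧
    ∃ S : Set G, IsCircSubgroupAdd op S ∧
      ¬ ∃ I : AddSubgroup G, (I : Set G) = S ∧ IsLeftIdealAdd op I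

section GammaFunction

variable {G : Type*} [AddGroup G] {γ : G → AddAut G} {g : G}

/-- The operation `a ∘ b = a + γ a b`, for which `γ a` is the map `b ↦ -a + a ∘ b`. -/
def circ (γ : G → AddAut G) (a b : G) : G :=
  a + γ a b

theorem circ_zero (γ : G → AddAut G) (a : G) : circ γ a 0 = a := by
  rw [circ, map_zero, add_zero]

/-- `γ` is a gamma function: it carries `circ γ` to composition of automorphisms, which is written
additively in `AddAut G`. These functions parametrize the skew brace operations on `G`. -/
def IsGammaFunction (γ : G → AddAut G) : Prop :=
  ∀ a b, γ (circ γ a b) = γ a + γ b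

namespace IsGammaFunction

theorem gamma_zero (hγ : IsGammaFunction γ) : γ 0 = 0 := by
  have h := hγ 0 0
  rwa [circ_zero, left_eq_add] at h

theorem circ_assoc (hγ : IsGammaFunction γ) (a b c : G) :
    circ γ (circ γ a b) c = circ γ a (circ γ b c) := by
  calc circ γ (circ γ a b) c = a + γ a b + (γ a + γ b) c := by rw [← hγ]; rfl
    _ = a + γ a (b + γ b c) := by rw [AddAut.add_apply, map_add, add_assoc]

theorem zero_circ (hγ : IsGammaFunction γ) (a : G) : circ γ 0 a = a := by
  rw [circ, hγ.gamma_zero, AddAut.zero_apply, zero_add]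

theorem exists_circ_inverse (hγ : IsGammaFunction γ) (a : G) :
    ∃ b, circ γ a b = 0 ∧ circ γ b a = 0 := by
  set b := (-γ a) (-a) with hb
  have circ_right : circ γ a b = 0 := by
    rw [circ, hb, AddAut.apply_neg_self, add_neg_cancel]
  have gamma_inverse : γ b = -γ a :=
    eq_neg_of_add_eq_zero_right (by rw [← hγ, circ_right, hγ.gamma_zero])
  refine ⟨b, circ_right, ?_⟩
  rw [circ, gamma_inverse, hb, ← map_add, neg_add_cancel, map_zero]

theorem isSkewBraceAdd_circ (hγ : IsGammaFunction γ) : IsSkewBraceAdd (circ γ) := by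
  refine ⟨⟨hγ.circ_assoc, 0, fun a ↦ ⟨hγ.zero_circ a, circ_zero γ a⟩, hγ.exists_circ_inverse⟩, ?_⟩
  intro a b c
  simp only [circ, map_add, sub_eq_add_neg, add_assoc, neg_add_cancel_left]

theorem isCircSubgroupAdd_pair (hγ : IsGammaFunction γ) (hg : γ g g = -g) :
    IsCircSubgroupAdd (circ γ) {0, g} := by
  have circ_self : circ γ g g = 0 := by rw [circ, hg, add_neg_cancel]
  refine ⟨Set.mem_insert _ _, ?_, ?_⟩
  · rintro a (rfl | rfl) b (rfl | rfl) <;> simp [hγ.zero_circ, circ_self, circ_zero]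
  · rintro a (rfl | rfl)
    · exact ⟨0, Set.mem_insert _ _, hγ.zero_circ 0, hγ.zero_circ 0⟩
    · exact ⟨a, Set.mem_insert_of_mem _ rfl, circ_self, circ_self⟩

end IsGammaFunction

theorem coe_addSubgroup_ne_pair (hg : g + g ≠ 0) (I : AddSubgroup G) : (I : Set G) ≠ {0, g} := by
  intro hI
  have g_mem : g ∈ I := by simp [← SetLike.mem_coe, hI]
  have sum_mem : g + g ∈ ({0, g} : Set G) := hI ▸ I.add_mem g_mem g_mem
  rcases sum_mem with sum_eq_zero | sum_eq_self
  · exact hg sum_eq_zero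
  · rw [Set.mem_singleton_iff, add_eq_left] at sum_eq_self
    exact hg (by rw [sum_eq_self, add_zero])

theorem IsGammaFunction.isBadAddGroup (hγ : IsGammaFunction γ) (hg : γ g g = -g)
    (hgg : g + g ≠ 0) : IsBadAddGroup G :=
  ⟨circ γ, hγ.isSkewBraceAdd_circ, {0, g}, hγ.isCircSubgroupAdd_pair hg,
    fun ⟨I, hI, _⟩ ↦ coe_addSubgroup_ne_pair hgg I hI⟩

end GammaFunction

section SignGamma

variable {G : Type*} [AddCommGroup G] {H : AddSubgroup G}

open scoped Classical in
/-- The gamma function attached to a subgroup `H` of index two: elements of `H` act trivially, all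
others by negation. -/
noncomputable def signGamma (H : AddSubgroup G) (a : G) : AddAut G :=
  if a ∈ H then 0 else AddEquiv.neg G

theorem signGamma_of_mem {a : G} (ha : a ∈ H) : signGamma H a = 0 :=
  if_pos ha

theorem signGamma_of_notMem {a : G} (ha : a ∉ H) : signGamma H a = AddEquiv.neg G :=
  if_neg ha

theorem signGamma_apply_mem_iff (a b : G) : signGamma H a b ∈ H ↔ b ∈ H := by
  by_cases ha : a ∈ H
  · rw [signGamma_of_mem ha, AddAut.zero_apply]
  · rw [signGamma_of_notMem ha, AddEquiv.neg_apply, neg_mem_iff]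

theorem isGammaFunction_signGamma (hH : H.index = 2) : IsGammaFunction (signGamma H) := by
  intro a b
  have circ_mem_iff : circ (signGamma H) a b ∈ H ↔ (a ∈ H ↔ b ∈ H) := by
    rw [circ, AddSubgroup.add_mem_iff_of_index_two hH, signGamma_apply_mem_iff]
  have negation_add_negation : (AddEquiv.neg G + AddEquiv.neg G : AddAut G) = 0 := by
    ext x
    exact neg_neg x
  by_cases ha : a ∈ H <;> by_cases hb : b ∈ H <;>
    simp [signGamma, circ_mem_iff, ha, hb, negation_add_negation]

theorem exists_notMem_add_self_ne_zero (hH : H ≠ ⊤) {x : G} (hx : x + x ≠ 0) :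
    ∃ g ∉ H, g + g ≠ 0 := by
  obtain ⟨y, hy⟩ : ∃ y, y ∉ H := by simpa [AddSubgroup.eq_top_iff'] using hH
  by_cases hxH : x ∈ H
  · by_cases hyy : y + y = 0
    · refine ⟨x + y, fun h ↦ hy ((H.add_mem_cancel_left hxH).1 h), ?_⟩
      rwa [add_add_add_comm, hyy, add_zero]
    · exact ⟨y, hy, hyy⟩
  · exact ⟨x, hxH, hx⟩

theorem cyclic_even_bad_general (hH : H.index = 2) {x : G} (hx : x + x ≠ 0) :
    IsBadAddGroup G := by
  have H_ne_top : H ≠ ⊤ := fun h ↦ by simp [h] at hH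
  obtain ⟨g, hgH, hgg⟩ := exists_notMem_add_self_ne_zero H_ne_top hx
  have gamma_self : signGamma H g g = -g := by rw [signGamma_of_notMem hgH, AddEquiv.neg_apply]
  exact (isGammaFunction_signGamma hH).isBadAddGroup gamma_self hgg

end SignGamma

theorem exists_addSubgroup_zmod_index_eq {m n : ℕ} (h : m ∣ n) :
    ∃ H : AddSubgroup (ZMod n), H.index = m := by
  let reduction : ZMod n →+ ZMod m := (ZMod.castHom h (ZMod m)).toAddMonoidHom
  have surjective : Function.Surjective reduction := ZMod.castHom_surjective h
  refine ⟨reduction.ker, ?_⟩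
  rw [AddSubgroup.index_ker, AddMonoidHom.range_eq_top.2 surjective, AddSubgroup.card_top,
    Nat.card_zmod]

theorem zmod_one_add_one_ne_zero {n : ℕ} (hn : 2 < n) : (1 + 1 : ZMod n) ≠ 0 := by
  rw [one_add_one_eq_two, ← Nat.cast_two, Ne, ZMod.natCast_eq_zero_iff]
  exact Nat.not_dvd_of_pos_of_lt two_pos hn

/-- **Example 3.3.** For every even `n ≥ 4`, the cyclic group `ℤ/nℤ` is bad: some skew
brace operation `∘` on `ℤ/nℤ` admits a `∘`-subgroup that is not a left ideal. -/
theorem cyclic_even_bad (n : ℕ) (hn : 4 ≤ n) (heven : Even n) :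
    ∃ op : ZMod n → ZMod n → ZMod n,
      IsSkewBraceAdd op ∧
      ∃ S : Set (ZMod n), IsCircSubgroupAdd op S ∧
        ¬ ∃ I : AddSubgroup (ZMod n), (I : Set (ZMod n)) = S ∧ IsLeftIdealAdd op I := by
  obtain ⟨H, hH⟩ := exists_addSubgroup_zmod_index_eq heven.two_dvd
  exact cyclic_even_bad_general hH (zmod_one_add_one_ne_zero (by lia))
end

section
/- Let p, q be primes with q dividing p − 1, and let m, n ≥ 1 be integers. Then the group ℤ/pⁿℤ × ℤ/qᵐℤ (with componentwise addition +) is bad: there exists a group operation ∘ on ℤ/pⁿℤ × ℤ/qᵐℤ such that (ℤ/pⁿℤ × ℤ/qᵐℤ, +, ∘) is a skew brace and some subgroup of (ℤ/pⁿℤ × ℤ/qᵐℤ, ∘) is not a left ideal. Explicitly, choosing an integer κ whose residue modulo pⁿ has multiplicative order q, the operation (δ,ξ) ∘ (δ',ξ') = (δ + κ^ξ δ', ξ + ξ') works, and (ℤ/pⁿℤ × ℤ/qᵐℤ, ∘) is the corresponding nonabelian semidirect product ℤ/pⁿℤ ⋊ ℤ/qᵐℤ. -/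
/-!
Let `H` act on `A` through a character `ψ`. The semidirect product operation on `A × H` always forms
a skew brace with the componentwise addition. The conjugate `{(v - ψ h • v, h)}` of the complement
`0 × H` is a `∘`-subgroup, and it is closed under `+` only if `h ↦ v - ψ h • v` is additive. For
`H` acting on `ℤ/pⁿℤ` by the powers of `κ` of order `q`, and `v = 1`, additivity would give
`q (1 - κ) = 1 - κ ^ q = 0`, which is impossible since `q` is a unit modulo `pⁿ` and `κ ≠ 1`.
-/

section SemidirectOp

variable {A H M : Type*} [AddGroup A] [AddGroup H] [Monoid M] [DistribMulAction M A]
  (ψ : AddChar H M)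

/-- The operation of the semidirect product `A ⋊ H`, as an operation on `A × H`, where `h : H` acts
on `A` as multiplication by the scalar `ψ h`. -/
def semidirectOp (x y : A × H) : A × H :=
  (x.1 + ψ x.2 • y.1, x.2 + y.2)

theorem isGroupOp_semidirectOp : IsGroupOp (semidirectOp ψ : A × H → A × H → A × H) := by
  refine ⟨fun a b c => ?_, 0, fun a => ?_, fun a => ⟨(-(ψ (-a.2) • a.1), -a.2), ?_, ?_⟩⟩
  · simp [semidirectOp, AddChar.map_add_eq_mul, mul_smul, add_assoc]
  · simp [semidirectOp]
  · simp [semidirectOp, smul_smul, ← AddChar.map_add_eq_mul]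
  · simp [semidirectOp]

theorem isSkewBraceAdd_semidirectOp :
    IsSkewBraceAdd (semidirectOp ψ : A × H → A × H → A × H) :=
  ⟨isGroupOp_semidirectOp ψ, fun a b c => by simp [semidirectOp, Prod.ext_iff, ← add_assoc]⟩

/-- The conjugate of the complement `0 × H` of `A` in the semidirect product `A ⋊ H` by the element
`(v, 0)`; a `∘`-subgroup that need not be closed under `+`. -/
def conjComplement (v : A) : Set (A × H) :=
  {x | x.1 = v - ψ x.2 • v}

theorem mk_mem_conjComplement (v : A) (h : H) : (v - ψ h • v, h) ∈ conjComplement ψ v :=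
  rfl

theorem isCircSubgroupAdd_conjComplement (v : A) :
    IsCircSubgroupAdd (semidirectOp ψ) (conjComplement ψ v) := by
  have semidirectOp_mk (h k : H) : semidirectOp ψ (v - ψ h • v, h) (v - ψ k • v, k) =
      (v - ψ (h + k) • v, h + k) := by
    simp [semidirectOp, AddChar.map_add_eq_mul, mul_smul, smul_sub]
  refine ⟨by simp [conjComplement], ?_, ?_⟩
  · rintro ⟨a, h⟩ (rfl : a = v - ψ h • v) ⟨b, k⟩ (rfl : b = v - ψ k • v)
    exact semidirectOp_mk h k ▸ mk_mem_conjComplement ψ v (h + k)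
  · rintro ⟨a, h⟩ (rfl : a = v - ψ h • v)
    exact ⟨_, mk_mem_conjComplement ψ v (-h), by simp [semidirectOp_mk], by simp [semidirectOp_mk]⟩

variable {ψ}

theorem semidirectOp_not_comm {v : A} {h : H} (hv : ψ h • v ≠ v) :
    ¬ ∀ x y : A × H, semidirectOp ψ x y = semidirectOp ψ y x := fun hcomm =>
  hv (by simpa [semidirectOp] using hcomm (0, h) (v, 0))

theorem nsmul_sub_smul_of_coe_eq_conjComplement {v : A} {I : AddSubgroup (A × H)}
    (hI : (I : Set (A × H)) = conjComplement ψ v) (k : ℕ) (h : H) :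
    k • (v - ψ h • v) = v - ψ (k • h) • v := by
  have hmem : (v - ψ h • v, h) ∈ (I : Set (A × H)) := hI ▸ mk_mem_conjComplement ψ v h
  have hkmem : k • (v - ψ h • v, h) ∈ (I : Set (A × H)) := I.nsmul_mem hmem k
  rwa [hI] at hkmem

theorem exists_isCircSubgroupAdd_not_isLeftIdealAdd {v : A} {h : H} {k : ℕ}
    (hk : ψ (k • h) • v = v) (hv : k • (v - ψ h • v) ≠ 0) :
    ∃ S : Set (A × H), IsCircSubgroupAdd (semidirectOp ψ) S ∧
      ¬ ∃ I : AddSubgroup (A × H), (I : Set (A × H)) = S ∧ IsLeftIdealAdd (semidirectOp ψ) I := by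
  refine ⟨conjComplement ψ v, isCircSubgroupAdd_conjComplement ψ v, ?_⟩
  rintro ⟨I, hI, -⟩
  exact hv (by rw [nsmul_sub_smul_of_coe_eq_conjComplement hI, hk, sub_self])

end SemidirectOp

theorem exists_orderOf_natCast_zmod_eq {N d : ℕ} [NeZero N] [IsCyclic (ZMod N)ˣ]
    (hd : d ∣ N.totient) : ∃ κ : ℕ, orderOf (κ : ZMod N) = d := by
  obtain ⟨u, hu⟩ := IsCyclic.exists_ofOrder_eq_natCard (α := (ZMod N)ˣ)
  rw [← ZMod.card_units_eq_totient, ← Nat.card_eq_fintype_card, ← hu] at hd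
  obtain ⟨κ, hκ⟩ := ZMod.natCast_zmod_surjective ((u ^ (orderOf u / d) : (ZMod N)ˣ) : ZMod N)
  exact ⟨κ, by rw [hκ, orderOf_units, orderOf_pow_orderOf_div (orderOf_pos u).ne' hd]⟩

theorem zmod_nsmul_ne_zero_of_coprime {N k : ℕ} (hk : k.Coprime N) {a : ZMod N} (ha : a ≠ 0) :
    k • a ≠ 0 := by
  have hunit : IsUnit (k : ZMod N) := (ZMod.isUnit_iff_coprime k N).mpr hk
  rwa [nsmul_eq_mul, Ne, hunit.mul_right_eq_zero]

theorem cyclic_pq_bad_general (p q : ℕ) (hp : p.Prime) (hq : 1 < q) (hdvd : q ∣ p - 1)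
    (r n : ℕ) (hr : r ≠ 0) (hqr : q ∣ r) (hn : 1 ≤ n) :
    (∃ κ : ℕ, orderOf (κ : ZMod (p ^ n)) = q) ∧
    ∀ κ : ℕ, orderOf (κ : ZMod (p ^ n)) = q →
      ∀ op : ZMod (p ^ n) × ZMod r → ZMod (p ^ n) × ZMod r → ZMod (p ^ n) × ZMod r,
        (∀ x y, op x y = (x.1 + (κ : ZMod (p ^ n)) ^ x.2.val * y.1, x.2 + y.2)) →
        IsSkewBraceAdd op ∧ (¬ ∀ x y, op x y = op y x) ∧
        ∃ S : Set (ZMod (p ^ n) × ZMod r), IsCircSubgroupAdd op S ∧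
          ¬ ∃ I : AddSubgroup (ZMod (p ^ n) × ZMod r),
            (I : Set (ZMod (p ^ n) × ZMod r)) = S ∧ IsLeftIdealAdd op I := by
  have : NeZero (p ^ n) := ⟨pow_ne_zero n hp.ne_zero⟩
  have : NeZero r := ⟨hr⟩
  have hqp : q < p := (Nat.le_of_dvd hp.pred_pos hdvd).trans_lt (Nat.pred_lt hp.ne_zero)
  refine ⟨?_, fun κ hκ op hop => ?_⟩
  · have := ZMod.isCyclic_units_of_prime_pow p hp (by omega) n
    exact exists_orderOf_natCast_zmod_eq (Nat.totient_prime_pow hp hn ▸ hdvd.mul_left _)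
  · have hκ_ne : (κ : ZMod (p ^ n)) ≠ 1 := fun h => hq.ne (by rw [← hκ, h, orderOf_one])
    have hκr : (κ : ZMod (p ^ n)) ^ r = 1 := orderOf_dvd_iff_pow_eq_one.mp (hκ ▸ hqr)
    let ψ : AddChar (ZMod r) (ZMod (p ^ n)) := AddChar.zmodChar r hκr
    have hψ_one : ψ 1 = κ := by simpa using AddChar.zmodChar_apply' hκr 1
    have hψ_q : ψ (q • 1) = 1 := by rw [AddChar.map_nsmul_eq_pow, hψ_one, ← hκ, pow_orderOf_eq_one]
    obtain rfl : op = semidirectOp ψ := funext₂ hop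
    have hcop : q.Coprime (p ^ n) :=
      (Nat.coprime_of_lt_prime (by omega) hqp hp).symm.pow_right n
    refine ⟨isSkewBraceAdd_semidirectOp ψ, semidirectOp_not_comm (v := 1) (h := 1) ?_,
      exists_isCircSubgroupAdd_not_isLeftIdealAdd (v := 1) (h := 1) (k := q) ?_ ?_⟩
    · rwa [hψ_one, smul_eq_mul, mul_one]
    · rw [hψ_q, one_smul]
    · rw [hψ_one, smul_eq_mul, mul_one]
      exact zmod_nsmul_ne_zero_of_coprime hcop (sub_ne_zero.mpr hκ_ne.symm)

/-- **Example 3.4.** Let `p, q` be primes with `q ∣ p - 1` and `m, n ≥ 1`. Then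
`ℤ/pⁿℤ × ℤ/qᵐℤ` is bad. Explicitly, there is a `κ` whose residue mod `pⁿ` has
multiplicative order `q`, and for any such `κ` the operation
`(δ,ξ) ∘ (δ',ξ') = (δ + κ^ξ δ', ξ + ξ')` makes `(ℤ/pⁿℤ × ℤ/qᵐℤ, +, ∘)` a skew brace
whose `∘`-group is the (nonabelian) semidirect product `ℤ/pⁿℤ ⋊ ℤ/qᵐℤ`, and some
`∘`-subgroup is not a left ideal. -/
theorem cyclic_pq_bad (p q : ℕ) (hp : p.Prime) (hq : q.Prime) (hdvd : q ∣ p - 1)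
    (m n : ℕ) (hm : 1 ≤ m) (hn : 1 ≤ n) :
    (∃ κ : ℕ, orderOf (κ : ZMod (p ^ n)) = q) ∧
    ∀ κ : ℕ, orderOf (κ : ZMod (p ^ n)) = q →
      ∀ op : ZMod (p ^ n) × ZMod (q ^ m) → ZMod (p ^ n) × ZMod (q ^ m) →
          ZMod (p ^ n) × ZMod (q ^ m),
        (∀ x y, op x y = (x.1 + (κ : ZMod (p ^ n)) ^ x.2.val * y.1, x.2 + y.2)) →
        IsSkewBraceAdd op ∧ (¬ ∀ x y, op x y = op y x) ∧
        ∃ S : Set (ZMod (p ^ n) × ZMod (q ^ m)), IsCircSubgroupAdd op S ∧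
          ¬ ∃ I : AddSubgroup (ZMod (p ^ n) × ZMod (q ^ m)),
            (I : Set (ZMod (p ^ n) × ZMod (q ^ m))) = S ∧ IsLeftIdealAdd op I := by
  exact cyclic_pq_bad_general p q hp hq.one_lt hdvd (q ^ m) n (pow_ne_zero m hq.ne_zero)
    (dvd_pow_self q (by omega)) hn
end
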